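/- arXiv:2605.01590 — 4 statements merged into one kernel-verified Lean document; each statement's English description precedes it below -/
import Mathlib

section
/- The group L₋₁ presented by two generators a, t subject to the two defining relations (a·t)³ = a³ and [[t,a],t] = a⁻³ is an infinite group and is not nilpotent. -/
/-- The commutator `[g,h] = g⁻¹h⁻¹gh`. -/
def fcomm {G : Type*} [Group G] (g h : G) : G := g⁻¹ * h⁻¹ * g * h

/-- The generator `a` of the free group on two generators. -/
def aF : FreeGroup (Fin 2) := FreeGroup.of 0

/-- The generator `t` of the free group on two generators. -/
def tF : FreeGroup (Fin 2) := FreeGroup.of 1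

/-- The relators of `L₋₁ = ⟨a, t ∣ (a·t)³ = a³, [[t,a],t] = a⁻³⟩`:
`(a·t)³·(a³)⁻¹` and `[[t,a],t]·a³`. -/
def LnegRels : Set (FreeGroup (Fin 2)) :=
  {(aF * tF) ^ 3 * (aF ^ 3)⁻¹, fcomm (fcomm tF aF) tF * aF ^ 3}

/-- The skeleton limit group `L₋₁` attached to the Q-tree. -/
abbrev Lneg : Type := PresentedGroup LnegRels

/-- The automorphism of order three of `ℤ²` given by multiplication by a primitive cube root of
unity on `ℤ[ω]` in the basis `1, ω`. -/
def cubeRotation : Equiv.Perm (ℤ × ℤ) where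
  toFun p := (-p.2, p.1 - p.2)
  invFun p := (p.2 - p.1, -p.1)
  left_inv p := by ext <;> simp
  right_inv p := by ext <;> simp

/-- The action of `L₋₁` on `ℤ²` in which `a` acts by rotation and `t` by translation. -/
def affineRep : Lneg →* Equiv.Perm (ℤ × ℤ) :=
  PresentedGroup.toGroup (f := ![cubeRotation, Equiv.addRight (1, 0)]) <| by
    rintro r (rfl | rfl) <;> ext p <;>
      simp [aF, tF, fcomm, pow_succ, cubeRotation, Equiv.Perm.mul_apply, Equiv.Perm.inv_def] <;> ring

/-- The image of `a` in `L₋₁`. -/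
def Lneg.a : Lneg := PresentedGroup.of 0

/-- The image of `t` in `L₋₁`. -/
def Lneg.t : Lneg := PresentedGroup.of 1

theorem affineRep_a : affineRep Lneg.a = cubeRotation := by
  simp [affineRep, Lneg.a]

theorem affineRep_t : affineRep Lneg.t = Equiv.addRight (1, 0) := by
  simp [affineRep, Lneg.t]

theorem affineRep_t_pow (n : ℕ) (p : ℤ × ℤ) :
    affineRep (Lneg.t ^ n) p = p + ((n : ℤ), 0) := by
  induction n with
  | zero => simp
  | succ n ih =>
    rw [pow_succ', map_mul, Equiv.Perm.mul_apply, ih, affineRep_t]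
    ext <;> simp [add_assoc]

instance Lneg.infinite : Infinite Lneg :=
  Infinite.of_injective (fun n : ℕ => Lneg.t ^ n) fun m n h => by
    have := congrArg (fun g => (affineRep g (0, 0)).1) h
    simpa only [affineRep_t_pow, zero_add, Prod.mk_add_mk, Nat.cast_inj] using this

open scoped commutatorElement in
/-- The commutator of a nontrivial translation with the rotation is a nontrivial translation, so
every term of the lower central series of `L₋₁` contains an element acting as one. -/
theorem exists_mem_lowerCentralSeries_affineRep_eq_addRight (n : ℕ) :
    ∃ g ∈ (⊤ : Subgroup Lneg).lowerCentralSeries n, ∃ v : ℤ × ℤ,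
      v ≠ 0 ∧ affineRep g = Equiv.addRight v := by
  induction n with
  | zero => exact ⟨Lneg.t, by simp, (1, 0), by simp, affineRep_t⟩
  | succ n ih =>
    obtain ⟨g, hg, v, hv, h⟩ := ih
    refine ⟨⁅g, Lneg.a⁆, Subgroup.commutator_mem_commutator hg (Subgroup.mem_top _),
      v - cubeRotation v, fun h0 => hv ?_, ?_⟩
    · simp only [cubeRotation, Equiv.coe_fn_mk, Prod.ext_iff, Prod.fst_sub, Prod.snd_sub,
        Prod.fst_zero, Prod.snd_zero] at h0 ⊢
      omega
    · rw [map_commutatorElement, h, affineRep_a]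
      ext p <;> simp [commutatorElement_def, cubeRotation, Equiv.Perm.mul_apply,
        Equiv.Perm.inv_def] <;> ring

theorem Lneg_infinite_and_not_nilpotent :
    Infinite Lneg ∧ ¬ Group.IsNilpotent Lneg := by
  refine ⟨inferInstance, fun h => ?_⟩
  obtain ⟨n, hn⟩ := Subgroup.nilpotent_iff_lowerCentralSeries.mp h
  obtain ⟨g, hg, v, hv, hgv⟩ := exists_mem_lowerCentralSeries_affineRep_eq_addRight n
  rw [hn, Subgroup.mem_bot] at hg
  apply hv
  simpa [hg] using (congrArg (fun e : Equiv.Perm (ℤ × ℤ) => e 0) hgv).symm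
end

section
/- The group L₊₁ presented by two generators a, t subject to the two defining relations (a·t)³ = a³ and [[t,a],t] = a³ is an infinite group and is not nilpotent. -/
/-- The relators of `L₊₁ = ⟨a, t ∣ (a·t)³ = a³, [[t,a],t] = a³⟩`:
`(a·t)³·(a³)⁻¹` and `[[t,a],t]·(a³)⁻¹`. -/
def LposRels : Set (FreeGroup (Fin 2)) :=
  {(aF * tF) ^ 3 * (aF ^ 3)⁻¹, fcomm (fcomm tF aF) tF * (aF ^ 3)⁻¹}

/-- The skeleton limit group `L₊₁` attached to the U-tree. -/
abbrev Lpos : Type := PresentedGroup LposRels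

open scoped commutatorElement

/-- The linear automorphism of order three of `ℤ²`. -/
def latticeRotation : Equiv.Perm (ℤ × ℤ) where
  toFun p := (-p.2, p.1 - p.2)
  invFun p := (p.2 - p.1, -p.1)
  left_inv p := by ext <;> simp
  right_inv p := by ext <;> simp

theorem latticeRotation_apply (p : ℤ × ℤ) : latticeRotation p = (-p.2, p.1 - p.2) := rfl

theorem latticeRotation_symm_apply (p : ℤ × ℤ) :
    latticeRotation.symm p = (p.2 - p.1, -p.1) := rfl

/-- The images of the generators `a`, `t` in the crystallographic group `ℤ² ⋊ ℤ/3`: the rotation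
and a unit translation. -/
def affineGen : Fin 2 → Equiv.Perm (ℤ × ℤ) := ![latticeRotation, Equiv.addRight (1, 0)]

theorem lift_affineGen_eq_one (r : FreeGroup (Fin 2)) (hr : r ∈ LposRels) :
    FreeGroup.lift affineGen r = 1 := by
  rcases hr with rfl | rfl <;> ext p <;>
    simp [fcomm, aF, tF, affineGen, latticeRotation_apply, latticeRotation_symm_apply, pow_succ] <;>
    ring

/-- The action of `L₊₁` on `ℤ²` by affine maps. -/
def affineHom : Lpos →* Equiv.Perm (ℤ × ℤ) := PresentedGroup.toGroup lift_affineGen_eq_one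

theorem affineHom_of_zero : affineHom (PresentedGroup.of 0) = latticeRotation :=
  PresentedGroup.toGroup.of lift_affineGen_eq_one

theorem affineHom_of_one : affineHom (PresentedGroup.of 1) = Equiv.addRight ((1, 0) : ℤ × ℤ) :=
  PresentedGroup.toGroup.of lift_affineGen_eq_one

theorem commutator_addRight_latticeRotation (b : ℤ × ℤ) :
    ⁅Equiv.addRight b, latticeRotation⁆ = Equiv.addRight (b.1 + b.2, 2 * b.2 - b.1) := by
  ext p <;> simp [commutatorElement_def, latticeRotation_apply, latticeRotation_symm_apply] <;> ring

theorem exists_mem_lowerCentralSeries_translation (n : ℕ) :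
    ∃ x ∈ (⊤ : Subgroup Lpos).lowerCentralSeries n, ∃ b : ℤ × ℤ, b ≠ 0 ∧
      affineHom x = Equiv.addRight b := by
  induction n with
  | zero => exact ⟨PresentedGroup.of 1, by simp, (1, 0), by simp, affineHom_of_one⟩
  | succ n ih =>
    obtain ⟨x, hx, b, hb, hxb⟩ := ih
    refine ⟨⁅x, PresentedGroup.of 0⁆, Subgroup.commutator_mem_commutator hx (Subgroup.mem_top _),
      _, ?_, by
        rw [map_commutatorElement, hxb, affineHom_of_zero, commutator_addRight_latticeRotation]⟩
    contrapose! hb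
    simp only [Prod.ext_iff, Prod.fst_zero, Prod.snd_zero] at hb ⊢
    lia

theorem Lpos_infinite_and_not_nilpotent :
    Infinite Lpos ∧ ¬ Group.IsNilpotent Lpos := by
  constructor
  · refine Infinite.of_injective (fun n : ℕ => (PresentedGroup.of 1 : Lpos) ^ n) fun m n h => ?_
    simpa [affineHom_of_one] using congrArg (fun x => affineHom x 0) h
  · intro h
    obtain ⟨n, hn⟩ := Subgroup.nilpotent_iff_lowerCentralSeries.mp h
    obtain ⟨x, hx, b, hb, hxb⟩ := exists_mem_lowerCentralSeries_translation n
    rw [hn, Subgroup.mem_bot] at hx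
    rw [hx, map_one] at hxb
    exact hb (by simpa using (congrArg (fun σ => σ 0) hxb).symm)
end

section
/- Fix an odd integer c ≥ 5. Then the six groups G_Q(c, R_x, R_y), obtained from the six choices of relator words R_x ∈ {x³, x³·s_c⁻¹} and R_y ∈ {y³·s₃⁻²·s₄⁻¹, y³·s₃⁻²·s₄⁻¹·s_c⁻¹, y³·s₃⁻²·s₄⁻¹·s_c⁻²}, are pairwise non-isomorphic. -/
namespace GQdef

/-- The generator `x` (as a word in the free group). -/
def xw : FreeGroup ℕ := FreeGroup.of 0

/-- The generator `y`. -/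
def yw : FreeGroup ℕ := FreeGroup.of 1

/-- The generator `t₃`. -/
def t3w : FreeGroup ℕ := FreeGroup.of 2

/-- The generator `s_j` (meaningful for `2 ≤ j ≤ c`). -/
def sw (j : ℕ) : FreeGroup ℕ := FreeGroup.of (j + 1)

/-- The defining relators of `G_Q(c, R_x, R_y)`:
`s₂ = [y,x]`, `t₃ = [s₂,y]`, `s_j = [s_{j−1},x]` for `3 ≤ j ≤ c`,
`s_j³ = s_{j+2}²·s_{j+3}` for `2 ≤ j ≤ c−3`, `s_{c−2}³ = s_c²`, `t₃³ = 1`,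
`R_x = 1`, `R_y = 1`.  (The superfluous generators `FreeGroup.of n` with
`n ≥ c+2` are killed, so that the effective generators are exactly
`x, y, t₃, s₂, …, s_c`.) -/
def rels (c : ℕ) (Rx Ry : FreeGroup ℕ) : Set (FreeGroup ℕ) :=
  {sw 2 * (fcomm yw xw)⁻¹, t3w * (fcomm (sw 2) yw)⁻¹, t3w ^ 3,
    sw (c - 2) ^ 3 * (sw c ^ 2)⁻¹, Rx, Ry} ∪
  {w | ∃ j : ℕ, 3 ≤ j ∧ j ≤ c ∧ w = sw j * (fcomm (sw (j - 1)) xw)⁻¹} ∪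
  {w | ∃ j : ℕ, 2 ≤ j ∧ j ≤ c - 3 ∧ w = sw j ^ 3 * (sw (j + 2) ^ 2 * sw (j + 3))⁻¹} ∪
  {w | ∃ n : ℕ, c + 2 ≤ n ∧ w = FreeGroup.of n}

/-- The group `G_Q(c, R_x, R_y)`. -/
abbrev GQ (c : ℕ) (Rx Ry : FreeGroup ℕ) : Type := PresentedGroup (rels c Rx Ry)

/-- The two admissible relator words `R_x ∈ {x³, x³·s_c⁻¹}`. -/
def RxSet (c : ℕ) : Set (FreeGroup ℕ) := {xw ^ 3, xw ^ 3 * (sw c)⁻¹}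

/-- The three admissible relator words
`R_y ∈ {y³·s₃⁻²·s₄⁻¹, y³·s₃⁻²·s₄⁻¹·s_c⁻¹, y³·s₃⁻²·s₄⁻¹·s_c⁻²}`. -/
def RySet (c : ℕ) : Set (FreeGroup ℕ) :=
  {yw ^ 3 * (sw 3 ^ 2)⁻¹ * (sw 4)⁻¹,
   yw ^ 3 * (sw 3 ^ 2)⁻¹ * (sw 4)⁻¹ * (sw c)⁻¹,
   yw ^ 3 * (sw 3 ^ 2)⁻¹ * (sw 4)⁻¹ * (sw c ^ 2)⁻¹}

end GQdef

open GQdef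

/-- An abelian group `V` with an endomorphism `X` such that `1 + X` has order three, together
with functionals `up`, `ep` reading off the first two layers of the filtration `X ^ i V` and an
embedding `zh` of `ZMod 3` onto its last layer. -/
structure Layered (V : Type) [AddCommGroup V] (k : ℕ) (β : ZMod 3) where
  X : AddMonoid.End V
  up : V →+ ZMod 3
  ep : V →+ ZMod 3
  zh : ZMod 3 →+ V
  y : V
  up_y : up y = 1
  up_X : ∀ v, up (X v) = 0
  ep_X : ∀ v, ep (X v) = up v
  up_zh : ∀ a, up (zh a) = 0
  ep_zh : ∀ a, ep (zh a) = 0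
  X_zh : ∀ a, X (zh a) = 0
  zh_inj : Function.Injective zh
  X_X : ∀ v, X (X v) = -((3 : ℤ) • (v + X v)) + zh (β * up v)
  neg_three_pow : ∀ v, (-3 : ℤ) ^ k • v = zh (up v)

namespace Layered

variable {V : Type} [AddCommGroup V] {k : ℕ} {β : ZMod 3} (D : Layered V k β)

/-- The endomorphism `1 + X`. -/
def T : AddMonoid.End V := 1 + D.X

/-- The powers of `1 + X`, indexed by `ZMod 3`. -/
def rot (j : ZMod 3) : AddMonoid.End V := D.T ^ j.val

lemma T_apply (v : V) : D.T v = v + D.X v := rfl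

lemma three_zh (a : ZMod 3) : (3 : ℤ) • D.zh a = 0 := by
  rw [← map_zsmul]
  have : (3 : ℤ) • a = 0 := by revert a; decide
  rw [this, map_zero]

lemma trace_T (v : V) : v + D.T v + D.T (D.T v) = D.zh (β * D.up v) := by
  simp only [T_apply, map_add]
  rw [D.X_X]
  module

lemma T_pow_three : D.T ^ 3 = 1 := by
  ext v
  have h := D.trace_T v
  have h2 := congrArg D.X h
  rw [D.X_zh] at h2
  simp only [map_add] at h2
  change D.T (D.T (D.T v)) = v
  rw [D.T_apply (D.T (D.T v)), ← sub_eq_zero, ← h2, D.T_apply (D.T v), D.T_apply v]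
  simp only [map_add]
  abel

lemma rot_zero (v : V) : D.rot 0 v = v := by simp [rot]

lemma rot_one (v : V) : D.rot 1 v = D.T v := by
  change (D.T ^ 1) v = _
  rw [pow_one]

lemma rot_two (v : V) : D.rot 2 v = D.T (D.T v) := by
  change (D.T ^ 2) v = _
  rw [pow_two]; rfl

lemma rot_add (i j : ZMod 3) (v : V) : D.rot (i + j) v = D.rot i (D.rot j v) := by
  have : D.rot (i + j) = D.rot i * D.rot j := by
    rw [rot, rot, rot, ← pow_add, ZMod.val_add, ← pow_eq_pow_mod _ D.T_pow_three]
  rw [this]; rfl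

lemma zmod_three_cases (j : ZMod 3) : j = 0 ∨ j = 1 ∨ j = 2 := by
  revert j; decide

lemma rot_zh (j a : ZMod 3) : D.rot j (D.zh a) = D.zh a := by
  have h : D.T (D.zh a) = D.zh a := by rw [T_apply, X_zh, add_zero]
  rcases zmod_three_cases j with rfl | rfl | rfl
  · exact D.rot_zero _
  · rw [rot_one, h]
  · rw [rot_two, h, h]

lemma X_rot (j : ZMod 3) (v : V) : D.X (D.rot j v) = D.rot j (D.X v) := by
  rcases zmod_three_cases j with rfl | rfl | rfl
  · simp only [rot_zero]
  · simp only [rot_one, T_apply, map_add]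
  · simp only [rot_two, T_apply, map_add]

lemma up_rot (j : ZMod 3) (v : V) : D.up (D.rot j v) = D.up v := by
  rcases zmod_three_cases j with rfl | rfl | rfl
  · simp only [rot_zero]
  · simp only [rot_one, T_apply, map_add, up_X, add_zero]
  · simp only [rot_two, T_apply, map_add, up_X, add_zero]

lemma ep_rot (j : ZMod 3) (v : V) : D.ep (D.rot j v) = D.ep v + j * D.up v := by
  rcases zmod_three_cases j with rfl | rfl | rfl
  · simp only [rot_zero, zero_mul, add_zero]
  · simp only [rot_one, T_apply, map_add, ep_X, one_mul]
  · simp only [rot_two, T_apply, map_add, ep_X, up_X]; ring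

lemma rot_sub (j : ZMod 3) (v : V) :
    ∃ u, D.rot j v - v = D.X u ∧ D.up u = j * D.up v := by
  rcases zmod_three_cases j with rfl | rfl | rfl
  · exact ⟨0, by simp [rot_zero]⟩
  · exact ⟨v, by simp [rot_one, T_apply]⟩
  · refine ⟨v + v + D.X v, ?_, ?_⟩
    · simp only [rot_two, T_apply, map_add]; abel
    · simp only [map_add, up_X]; ring

lemma trace_rot {e : ZMod 3} (he : e ≠ 0) (v : V) :
    v + D.rot e v + D.rot e (D.rot e v) = D.zh (β * D.up v) := by
  rcases zmod_three_cases e with rfl | rfl | rfl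
  · exact absurd rfl he
  · simp only [rot_one, trace_T]
  · rw [← rot_add]
    have : (2 : ZMod 3) + 2 = 1 := by decide
    rw [this, rot_one, rot_two, ← D.trace_T v]
    abel

lemma up_eq_zero_of_three_smul (hk : 2 ≤ k) {u : V} (h : (3 : ℤ) • D.X (D.X u) = 0) :
    D.up u = 0 := by
  rw [X_X, smul_add, three_zh, add_zero] at h
  obtain ⟨m, rfl⟩ := Nat.exists_eq_add_of_le hk
  have h2 := D.neg_three_pow (u + D.X u)
  have h3 : (-3 : ℤ) ^ (2 + m) • (u + D.X u) =
      -((-3 : ℤ) ^ m • ((3 : ℤ) • -((3 : ℤ) • (u + D.X u)))) := by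
    rw [pow_add]; module
  rw [h3, h, smul_zero, neg_zero, map_add, up_X, add_zero] at h2
  exact D.zh_inj (by rw [← h2, map_zero])

/-- The difference operator `(1 + X) ^ e - 1`. -/
def diff (e : ZMod 3) : AddMonoid.End V := D.rot e - 1

lemma diff_apply (e : ZMod 3) (v : V) : D.diff e v = D.rot e v - v := rfl

lemma up_diff (e : ZMod 3) (v : V) : D.up (D.diff e v) = 0 := by
  rw [diff_apply, map_sub, up_rot, sub_self]

lemma ep_diff (e : ZMod 3) (v : V) : D.ep (D.diff e v) = e * D.up v := by
  rw [diff_apply, map_sub, ep_rot, add_sub_cancel_left]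

lemma diff_zh (e a : ZMod 3) : D.diff e (D.zh a) = 0 := by
  rw [diff_apply, rot_zh, sub_self]

lemma diff_diff {e : ZMod 3} (he : e ≠ 0) (v : V) :
    D.diff e (D.diff e v) = -((3 : ℤ) • D.rot e v) + D.zh (β * D.up v) := by
  rw [← D.trace_rot he]
  simp only [diff_apply, map_sub]
  module

lemma three_smul_eq {e : ZMod 3} (he : e ≠ 0) (v : V) :
    (3 : ℤ) • v = (2 : ℤ) • D.diff e (D.diff e v) + D.diff e (D.diff e (D.diff e v))
      + D.zh (β * D.up v) := by
  have h := D.diff_diff he v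
  have hz := D.three_zh (β * D.up v)
  have ht := congrArg ((3 : ℤ) • ·) (D.trace_rot he v)
  simp only [three_zh] at ht
  rw [h]
  simp only [map_add, map_neg, map_zsmul, diff_zh]
  rw [D.diff_apply e (D.rot e v)]
  linear_combination (norm := module) ht - hz

lemma diff_pow_even {e : ZMod 3} (he : e ≠ 0) {m : ℕ} (hm : 2 ≤ m) (v : V) :
    (D.diff e ^ (2 * m)) v = (-3 : ℤ) ^ m • (D.rot e ^ m) v := by
  induction m, hm using Nat.le_induction with
  | base =>
    change D.diff e (D.diff e (D.diff e (D.diff e v))) = (-3 : ℤ) ^ 2 • D.rot e (D.rot e v)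
    rw [D.diff_diff he (D.diff e (D.diff e v)), D.diff_diff he v, map_add, rot_zh, smul_add,
      three_zh, ← D.diff_diff he v, up_diff, mul_zero, map_zero, map_neg, map_zsmul]
    module
  | succ m hm ih =>
    have h1 : (D.diff e ^ (2 * (m + 1))) v = D.diff e (D.diff e ((D.diff e ^ (2 * m)) v)) := by
      rw [show 2 * (m + 1) = 2 * m + 1 + 1 by ring, pow_succ', pow_succ']; rfl
    have h2 : D.up ((D.diff e ^ (2 * m)) v) = 0 := by
      rw [show 2 * m = 2 * m - 1 + 1 by omega, pow_succ']
      exact D.up_diff _ _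
    rw [h1, D.diff_diff he, h2, mul_zero, map_zero, add_zero, ih, map_zsmul]
    have h3 : (D.rot e ^ (m + 1)) v = D.rot e ((D.rot e ^ m) v) := by rw [pow_succ']; rfl
    rw [h3, pow_succ]; module

lemma up_rot_pow (e : ZMod 3) (m : ℕ) (v : V) : D.up ((D.rot e ^ m) v) = D.up v := by
  induction m with
  | zero => rfl
  | succ m ih =>
    rw [pow_succ']
    exact (D.up_rot _ _).trans ih

lemma diff_pow_top {e : ZMod 3} (he : e ≠ 0) (hk : 2 ≤ k) (v : V) :
    (D.diff e ^ (2 * k)) v = D.zh (D.up v) := by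
  rw [D.diff_pow_even he hk, neg_three_pow, up_rot_pow]

end Layered

/-- The carry of the addition of representatives in `ZMod 3`. -/
def carry (i j : ZMod 3) : ZMod 3 := if i.val + j.val < 3 then 0 else 1

lemma carry_cocycle (i j l : ZMod 3) :
    carry i j + carry (i + j) l = carry j l + carry i (j + l) := by
  revert i j l; decide

lemma carry_comm (i j : ZMod 3) : carry i j = carry j i := by
  revert i j; decide

lemma carry_zero_right (i : ZMod 3) : carry i 0 = 0 := by
  revert i; decide

lemma carry_zero_left (i : ZMod 3) : carry 0 i = 0 := by
  revert i; decide

lemma carry_triple (i : ZMod 3) : carry i i + carry (i + i) i = i := by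
  revert i; decide

/-- The extension by `ZMod 3` (with action `rot`) of the class two group on `V × ZMod 3`;
`⟨i, v, τ⟩` stands for `x ^ i * v * t ^ τ`, and `x ^ 3 = zh α`. -/
@[ext] structure Model {V : Type} [AddCommGroup V] {k : ℕ} {β : ZMod 3} (D : Layered V k β)
    (α : ZMod 3) where
  i : ZMod 3
  v : V
  τ : ZMod 3

namespace Model

variable {V : Type} [AddCommGroup V] {k : ℕ} {β : ZMod 3} {D : Layered V k β} {α : ZMod 3}

lemma three_eq_zero : (3 : ZMod 3) = 0 := rfl

instance : Mul (Model D α) :=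
  ⟨fun a b => ⟨a.i + b.i, D.rot b.i a.v + b.v + D.zh (α * carry a.i b.i),
    a.τ + b.τ - b.i * D.up a.v ^ 2 + (D.ep a.v + b.i * D.up a.v) * D.up b.v⟩⟩

instance : One (Model D α) := ⟨⟨0, 0, 0⟩⟩

instance : Inv (Model D α) :=
  ⟨fun a => ⟨-a.i, -D.rot (-a.i) (a.v + D.zh (α * carry (-a.i) a.i)),
    -a.τ + a.i * D.up a.v ^ 2 + D.ep a.v * D.up a.v⟩⟩

@[simp] lemma mul_i (a b : Model D α) : (a * b).i = a.i + b.i := rfl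
@[simp] lemma mul_v (a b : Model D α) :
    (a * b).v = D.rot b.i a.v + b.v + D.zh (α * carry a.i b.i) := rfl
@[simp] lemma mul_τ (a b : Model D α) : (a * b).τ =
    a.τ + b.τ - b.i * D.up a.v ^ 2 + (D.ep a.v + b.i * D.up a.v) * D.up b.v := rfl
@[simp] lemma one_i : (1 : Model D α).i = 0 := rfl
@[simp] lemma one_v : (1 : Model D α).v = 0 := rfl
@[simp] lemma one_τ : (1 : Model D α).τ = 0 := rfl
lemma inv_def (a : Model D α) : a⁻¹ = ⟨-a.i, -D.rot (-a.i) (a.v + D.zh (α * carry (-a.i) a.i)),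
    -a.τ + a.i * D.up a.v ^ 2 + D.ep a.v * D.up a.v⟩ := rfl

instance : Group (Model D α) :=
  Group.ofLeftAxioms
    (fun a b c => by
      ext
      · simp [add_assoc]
      · simp only [mul_v, mul_i, map_add, D.rot_zh]
        rw [add_comm b.i c.i, D.rot_add]
        have h : D.zh (α * carry a.i b.i) + D.zh (α * carry (a.i + b.i) c.i) =
            D.zh (α * carry b.i c.i) + D.zh (α * carry a.i (c.i + b.i)) := by
          rw [← map_add, ← map_add, ← mul_add, ← mul_add, carry_cocycle, add_comm c.i]
        linear_combination (norm := module) h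
      · simp only [mul_v, mul_i, mul_τ, map_add, D.up_rot, D.ep_rot, D.up_zh, D.ep_zh]
        linear_combination (-c.i * D.up a.v * D.up b.v) * three_eq_zero)
    (fun a => by
      ext
      · simp
      · simp [carry_zero_left]
      · simp)
    (fun a => by
      ext
      · simp [inv_def]
      · simp only [inv_def, mul_v, map_neg, one_v]
        rw [← D.rot_add, add_neg_cancel, D.rot_zero]; abel
      · simp only [inv_def, mul_τ, map_neg, D.up_rot, D.ep_rot, D.up_zh, D.ep_zh, one_τ, map_add]
        ring)

end Model

section Group

variable {G H : Type*} [Group G] [Group H]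

lemma mul_mul_fcomm (g h : G) : h * g * fcomm g h = g * h := by
  simp [fcomm, mul_assoc]

lemma map_fcomm (f : G →* H) (g h : G) : f (fcomm g h) = fcomm (f g) (f h) := by
  simp [fcomm]

lemma fcomm_eq_one {A : Type*} [CommGroup A] (g h : A) : fcomm g h = 1 := by
  simp [fcomm, mul_comm]

/-- The left-normed commutators `[y, x, …, x]` with `n + 1` entries `x`. -/
def engel (x y : G) : ℕ → G
  | 0 => fcomm y x
  | n + 1 => fcomm (engel x y n) x

end Group

namespace Model

variable {V : Type} [AddCommGroup V] {k : ℕ} {β : ZMod 3} {D : Layered V k β} {α : ZMod 3}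

lemma fcomm_i (a b : Model D α) : (fcomm a b).i = 0 := by
  have h := congrArg Model.i (mul_mul_fcomm a b)
  simp only [mul_i] at h
  linear_combination h

lemma fcomm_v (a b : Model D α) : (fcomm a b).v = D.diff b.i a.v - D.diff a.i b.v := by
  have h := congrArg Model.v (mul_mul_fcomm a b)
  simp only [mul_v, fcomm_i, D.rot_zero, mul_i, carry_zero_right, mul_zero, map_zero,
    carry_comm b.i a.i] at h
  rw [D.diff_apply, D.diff_apply]
  linear_combination (norm := module) h

lemma fcomm_τ {a b : Model D α} (ha : a.i = 0) (hu : D.up a.v = 0) :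
    (fcomm a b).τ = D.ep a.v * D.up b.v := by
  have h := congrArg Model.τ (mul_mul_fcomm a b)
  have hv : D.up (fcomm a b).v = 0 := by
    rw [fcomm_v, map_sub, D.up_diff, D.up_diff, sub_self]
  simp only [mul_τ, fcomm_i, hv, ha, hu] at h
  linear_combination h

lemma engel_i (x y : Model D α) (n : ℕ) : (engel x y n).i = 0 := by
  cases n <;> exact fcomm_i _ _

lemma diff_zero (v : V) : D.diff 0 v = 0 := by
  rw [D.diff_apply, D.rot_zero, sub_self]

lemma engel_v {x y : Model D α} (hy : y.i = 0) (n : ℕ) :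
    (engel x y n).v = (D.diff x.i ^ (n + 1)) y.v := by
  induction n with
  | zero => rw [engel, fcomm_v, hy, diff_zero, sub_zero, zero_add, pow_one]
  | succ n ih =>
    rw [engel, fcomm_v, engel_i, diff_zero, sub_zero, ih, pow_succ' _ (n + 1)]
    rfl

lemma up_diff_pow (e : ZMod 3) (n : ℕ) (v : V) : D.up ((D.diff e ^ (n + 1)) v) = 0 := by
  rw [pow_succ']
  exact D.up_diff _ _

lemma ep_diff_pow (e : ZMod 3) (n : ℕ) (v : V) : D.ep ((D.diff e ^ (n + 2)) v) = 0 := by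
  rw [pow_succ']
  change D.ep (D.diff e ((D.diff e ^ (n + 1)) v)) = 0
  rw [D.ep_diff, up_diff_pow, mul_zero]

lemma engel_τ {x y : Model D α} (hy : y.i = 0) (n : ℕ) : (engel x y (n + 2)).τ = 0 := by
  rw [engel, fcomm_τ (engel_i _ _ _), engel_v hy, ep_diff_pow, zero_mul]
  rw [engel_v hy, up_diff_pow]

lemma pow_i {a : Model D α} (ha : a.i = 0) (n : ℕ) : (a ^ n).i = 0 := by
  induction n with
  | zero => rfl
  | succ n ih => rw [pow_succ, mul_i, ih, ha, add_zero]

lemma mul_v_of_i_eq_zero {a b : Model D α} (hb : b.i = 0) :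
    (a * b).v = a.v + b.v := by
  rw [mul_v, hb, D.rot_zero, carry_zero_right, mul_zero, map_zero, add_zero]

lemma pow_v {a : Model D α} (ha : a.i = 0) (n : ℕ) : (a ^ n).v = n • a.v := by
  induction n with
  | zero => rw [zero_smul]; rfl
  | succ n ih => rw [pow_succ, mul_v_of_i_eq_zero ha, ih, succ_nsmul]

lemma mul_τ_of_i_eq_zero {a b : Model D α} (hb : b.i = 0) (hu : D.up b.v = 0) :
    (a * b).τ = a.τ + b.τ := by
  rw [mul_τ, hb, hu]; ring

lemma pow_τ {a : Model D α} (ha : a.i = 0) (hu : D.up a.v = 0) (n : ℕ) :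
    (a ^ n).τ = n * a.τ := by
  induction n with
  | zero => rw [Nat.cast_zero, zero_mul]; rfl
  | succ n ih => rw [pow_succ, mul_τ_of_i_eq_zero ha hu, ih]; push_cast; ring

lemma cube_i (a : Model D α) : (a ^ 3).i = 0 := by
  simp only [pow_succ, pow_zero, one_mul, mul_i]
  linear_combination a.i * three_eq_zero

lemma cube_v {a : Model D α} (ha : a.i ≠ 0) :
    (a ^ 3).v = D.zh (β * D.up a.v + α * a.i) := by
  have h : D.zh (α * a.i) = D.zh (α * carry a.i a.i) + D.zh (α * carry (a.i + a.i) a.i) := by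
    rw [← map_add, ← mul_add, carry_triple]
  rw [map_add, ← D.trace_rot ha, h]
  simp only [pow_succ, pow_zero, one_mul, mul_v, mul_i, map_add, D.rot_zh]
  abel

lemma cube_τ (a : Model D α) : (a ^ 3).τ = -a.i * D.up a.v ^ 2 := by
  simp only [pow_succ, pow_zero, one_mul, mul_v, mul_τ, map_add, D.up_rot, D.ep_rot,
    D.up_zh, D.ep_zh]
  linear_combination (a.τ + D.ep a.v * D.up a.v) * three_eq_zero

/-- The character of `Model D α` with prescribed values on the two generators. -/
def character (l m : ZMod 3) : Model D α →* Multiplicative (ZMod 3) where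
  toFun a := Multiplicative.ofAdd (l * a.i + m * D.up a.v)
  map_one' := by simp
  map_mul' a b := by
    rw [← ofAdd_add]
    simp only [mul_i, mul_v, map_add, D.up_rot, D.up_zh]
    congr 1
    ring

/-- The image of the `n`-th generator of the presentation in the model. -/
def image (D : Layered V k β) (α : ZMod 3) : ℕ → Model D α
  | 0 => ⟨1, 0, 0⟩
  | 1 => ⟨0, D.y, 0⟩
  | 2 => fcomm (engel ⟨1, 0, 0⟩ ⟨0, D.y, 0⟩ 0) ⟨0, D.y, 0⟩
  | n + 3 => engel ⟨1, 0, 0⟩ ⟨0, D.y, 0⟩ n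

end Model

namespace GQdef

/-- The relator `x³ = s_c ^ a`. -/
def xRel (c a : ℕ) : FreeGroup ℕ := xw ^ 3 * (sw c ^ a)⁻¹

/-- The relator `y³ = s_c ^ b * s₄ * s₃ ^ 2`. -/
def yRel (c b : ℕ) : FreeGroup ℕ := yw ^ 3 * (sw 3 ^ 2)⁻¹ * (sw 4)⁻¹ * (sw c ^ b)⁻¹

section Relations

variable {G : Type*} [Group G] {c a b : ℕ} (f : GQ c (xRel c a) (yRel c b) →* G)

/-- The hom on words induced by a hom from `GQ`. -/
def word : FreeGroup ℕ →* G := f.comp (PresentedGroup.mk _)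

variable {f}

lemma word_eq_one {r : FreeGroup ℕ} (hr : r ∈ rels c (xRel c a) (yRel c b)) :
    word f r = 1 := by
  change f (PresentedGroup.mk _ r) = 1
  rw [PresentedGroup.one_of_mem hr, map_one]

lemma word_s_two : word f (sw 2) = engel (word f xw) (word f yw) 0 := by
  have h := word_eq_one (f := f) (r := sw 2 * (fcomm yw xw)⁻¹) (by simp [rels])
  rw [map_mul, map_inv, mul_inv_eq_one, map_fcomm] at h
  exact h

lemma word_s (n : ℕ) (hn : n + 2 ≤ c) :
    word f (sw (n + 2)) = engel (word f xw) (word f yw) n := by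
  induction n with
  | zero => exact word_s_two
  | succ n ih =>
    have h := word_eq_one (f := f) (r := sw (n + 1 + 2) * (fcomm (sw (n + 2)) xw)⁻¹)
      (Or.inl (Or.inl (Or.inr ⟨n + 1 + 2, by omega, hn, rfl⟩)))
    rw [map_mul, map_inv, mul_inv_eq_one, map_fcomm, ih (by omega)] at h
    exact h

lemma word_t : word f t3w = fcomm (engel (word f xw) (word f yw) 0) (word f yw) := by
  have h := word_eq_one (f := f) (r := t3w * (fcomm (sw 2) yw)⁻¹) (by simp [rels])
  rw [map_mul, map_inv, mul_inv_eq_one, map_fcomm, word_s_two] at h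
  exact h

lemma word_t_cube : word f t3w ^ 3 = 1 := by
  rw [← map_pow]
  exact word_eq_one (by simp [rels])

lemma word_x_cube : word f xw ^ 3 = word f (sw c) ^ a := by
  have h := word_eq_one (f := f) (r := xRel c a) (by simp [rels])
  rwa [xRel, map_mul, map_inv, mul_inv_eq_one, map_pow, map_pow] at h

lemma word_y_cube :
    word f yw ^ 3 = word f (sw c) ^ b * word f (sw 4) * word f (sw 3) ^ 2 := by
  have h := word_eq_one (f := f) (r := yRel c b) (by simp [rels])
  rwa [yRel, map_mul, map_inv, mul_inv_eq_one, map_mul, map_inv, mul_inv_eq_iff_eq_mul, map_mul,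
    map_inv, mul_inv_eq_iff_eq_mul, map_pow, map_pow, map_pow] at h

lemma eq_one_of_word_eq_one {A : Type*} [CommGroup A]
    (f : GQ c (xRel c a) (yRel c b) →* A) (hx : word f xw = 1) (hy : word f yw = 1) : f = 1 := by
  ext n
  change word f (FreeGroup.of n) = 1
  match n with
  | 0 => exact hx
  | 1 => exact hy
  | 2 => exact word_t.trans (fcomm_eq_one _ _)
  | n + 3 =>
    by_cases hn : n + 2 ≤ c
    · refine (word_s n hn).trans ?_
      cases n <;> exact fcomm_eq_one _ _
    · exact word_eq_one (Or.inr ⟨n + 3, by omega, rfl⟩)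

end Relations

section Main

variable {V : Type} [AddCommGroup V] {k : ℕ} {β α : ZMod 3} {D : Layered V k β}
variable {c a b : ℕ}

lemma exists_character (e p g q : ZMod 3) (h : e * q - g * p = 0) :
    ∃ l m : ZMod 3, (l ≠ 0 ∨ m ≠ 0) ∧ l * e + m * p = 0 ∧ l * g + m * q = 0 := by
  revert e p g q; decide

lemma det_ne_zero {f : GQ c (xRel c a) (yRel c b) →* Model D α}
    (hf : ⟨1, 0, 0⟩ ∈ f.range ∧ ⟨0, D.y, 0⟩ ∈ f.range) :
    (word f xw).i * D.up (word f yw).v - (word f yw).i * D.up (word f xw).v ≠ 0 := by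
  intro h
  obtain ⟨l, m, hlm, hx, hy⟩ := exists_character _ _ _ _ h
  have hone : (Model.character l m).comp f = 1 := eq_one_of_word_eq_one _
    (congrArg Multiplicative.ofAdd hx) (congrArg Multiplicative.ofAdd hy)
  have hall {u : Model D α} (hu : u ∈ f.range) : l * u.i + m * D.up u.v = 0 := by
    obtain ⟨g, rfl⟩ := hu
    exact Multiplicative.ofAdd.injective (DFunLike.congr_fun hone g)
  have h1 := hall hf.1
  have h2 := hall hf.2
  simp only [map_zero, D.up_y, mul_one, mul_zero, add_zero, zero_add] at h1 h2
  exact hlm.elim (· h1) (· h2)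

lemma word_y_i_eq_zero (hk : 2 ≤ k) {f : GQ c (xRel c a) (yRel c b) →* Model D α}
    (hf : ⟨1, 0, 0⟩ ∈ f.range ∧ ⟨0, D.y, 0⟩ ∈ f.range) : (word f yw).i = 0 := by
  by_contra hg
  have hd := det_ne_zero hf
  have h := congrArg Model.v (word_t_cube (f := f))
  rw [word_t, Model.pow_v (Model.fcomm_i _ _), Model.fcomm_v, Model.engel_i, Model.diff_zero,
    sub_zero, engel, Model.fcomm_v] at h
  generalize word f xw = x at *
  generalize word f yw = y at *
  obtain ⟨u₁, h₁, hu₁⟩ := D.rot_sub x.i y.v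
  obtain ⟨u₂, h₂, hu₂⟩ := D.rot_sub y.i x.v
  obtain ⟨u, hu, huu⟩ := D.rot_sub y.i (u₁ - u₂)
  rw [D.diff_apply x.i, D.diff_apply y.i, D.diff_apply y.i, h₁, h₂, ← map_sub, ← D.X_rot,
    ← map_sub, hu] at h
  have h0 := D.up_eq_zero_of_three_smul hk (u := u)
    (by rw [← Model.one_v (D := D) (α := α), ← h]; module)
  rw [huu, map_sub, hu₁, hu₂] at h0
  exact (mul_ne_zero hg hd) h0

lemma exponents_eq {a b a' b' : ℕ} (ha : a < 2) (ha' : a' < 2) (hb : b < 3) (hb' : b' < 3)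
    (hk : 2 ≤ k) {D : Layered V k (b' : ZMod 3)}
    {f : GQ (2 * k + 1) (xRel (2 * k + 1) a) (yRel (2 * k + 1) b) →* Model D (a' : ZMod 3)}
    (hf : ⟨1, 0, 0⟩ ∈ f.range ∧ ⟨0, D.y, 0⟩ ∈ f.range) : a = a' ∧ b = b' := by
  have hg := word_y_i_eq_zero hk hf
  have hd := det_ne_zero hf
  have hx := word_x_cube (f := f)
  have hy := word_y_cube (f := f)
  obtain ⟨m, rfl⟩ := Nat.exists_eq_add_of_le hk
  have hs := word_s (f := f) (2 * m + 1 + 2) (by omega)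
  rw [show 2 * m + 1 + 2 + 2 = 2 * (2 + m) + 1 by ring] at hs
  rw [hs] at hx hy
  rw [word_s 1 (by omega), word_s 2 (by omega)] at hy
  generalize word f xw = x at *
  generalize word f yw = y at *
  rw [hg, zero_mul, sub_zero] at hd
  have he : x.i ≠ 0 := left_ne_zero_of_mul hd
  have hw : D.up y.v ≠ 0 := right_ne_zero_of_mul hd
  have hsv : (engel x y (2 * m + 1 + 2)).v = D.zh (D.up y.v) := by
    rw [Model.engel_v hg, ← D.diff_pow_top he hk]
    congr 2; ring
  have hxτ := congrArg Model.τ hx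
  rw [Model.cube_τ, Model.pow_τ (Model.engel_i _ _ _) (by rw [hsv, D.up_zh]),
    Model.engel_τ hg, mul_zero, neg_mul, neg_eq_zero] at hxτ
  have hv : D.up x.v = 0 := by
    simpa [he] using hxτ
  have hxv := congrArg Model.v hx
  rw [Model.cube_v he, Model.pow_v (Model.engel_i _ _ _), hsv, hv, mul_zero, zero_add,
    ← map_nsmul] at hxv
  have ea := D.zh_inj hxv
  have hyv := congrArg Model.v hy
  rw [Model.pow_v hg, Model.mul_v_of_i_eq_zero (Model.pow_i (Model.engel_i _ _ _) _),
    Model.mul_v_of_i_eq_zero (Model.engel_i _ _ _), Model.pow_v (Model.engel_i _ _ _),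
    Model.pow_v (Model.engel_i _ _ _), hsv, Model.engel_v hg, Model.engel_v hg] at hyv
  have h3 := D.three_smul_eq he y.v
  have eb : b • D.up y.v = (b' : ZMod 3) * D.up y.v := by
    apply D.zh_inj
    rw [map_nsmul]
    change _ = _ + D.diff x.i (D.diff x.i (D.diff x.i y.v)) + _ • D.diff x.i (D.diff x.i y.v)
      at hyv
    linear_combination (norm := module) h3 - hyv
  generalize x.i = e at *
  generalize D.up y.v = w at *
  rw [nsmul_eq_mul] at ea eb
  constructor
  · clear * - he hw ea ha ha'
    interval_cases a <;> interval_cases a' <;> revert e w <;> decide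
  · have := mul_right_cancel₀ hw eb
    interval_cases b <;> interval_cases b' <;> revert this <;> decide

lemma image_relations (hk : 2 ≤ k) {a b : ℕ} {D : Layered V k (b : ZMod 3)} :
    ∀ r ∈ rels (2 * k + 1) (xRel (2 * k + 1) a) (yRel (2 * k + 1) b),
      FreeGroup.lift (Model.image D (a : ZMod 3)) r = 1 := by
  set F := FreeGroup.lift (Model.image D (a : ZMod 3))
  set x : Model D (a : ZMod 3) := ⟨1, 0, 0⟩ with hxd
  set y : Model D (a : ZMod 3) := ⟨0, D.y, 0⟩
  have hy : y.i = 0 := rfl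
  have h1 : x.i ≠ 0 := one_ne_zero
  have Fx : F xw = x := FreeGroup.lift_apply_of
  have Fy : F yw = y := FreeGroup.lift_apply_of
  have Ft : F t3w = fcomm (engel x y 0) y := FreeGroup.lift_apply_of
  have Fs (n : ℕ) : F (sw (n + 2)) = engel x y n := FreeGroup.lift_apply_of
  have hci (n : ℕ) : (engel x y n).i = 0 := Model.engel_i x y n
  have hcu (n : ℕ) : D.up (engel x y n).v = 0 := by rw [Model.engel_v hy, Model.up_diff_pow]
  have hcτ (n : ℕ) : (engel x y (n + 2)).τ = 0 := Model.engel_τ hy n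
  have hsucc (n : ℕ) : (engel x y (n + 1)).v = D.diff x.i (engel x y n).v := by
    rw [Model.engel_v hy, Model.engel_v hy, pow_succ' _ (n + 1)]; rfl
  have htop : (engel x y (2 * k - 1)).v = D.zh 1 := by
    rw [Model.engel_v hy, show 2 * k - 1 + 1 = 2 * k by omega, D.diff_pow_top h1 hk, D.up_y]
  have hbeyond (n : ℕ) : (engel x y (2 * k + n)).v = 0 := by
    induction n with
    | zero =>
      rw [show 2 * k + 0 = 2 * k - 1 + 1 by omega, hsucc, htop, D.diff_zh]
    | succ n ih => rw [← add_assoc, hsucc, ih, map_zero]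
  have hcube (n : ℕ) : engel x y n ^ 3 = engel x y (n + 2) ^ 2 * engel x y (n + 3) := by
    ext
    · rw [Model.cube_i, Model.mul_i, Model.pow_i (hci _), hci, add_zero]
    · rw [Model.mul_v_of_i_eq_zero (hci _), Model.pow_v (hci _), Model.pow_v (hci _)]
      have h := D.three_smul_eq h1 (engel x y n).v
      rw [hcu, mul_zero, map_zero, add_zero] at h
      rw [hsucc (n + 2), hsucc (n + 1), hsucc n]
      linear_combination (norm := module) h
    · rw [Model.cube_τ, hci, Model.mul_τ_of_i_eq_zero (hci _) (hcu _),
        Model.pow_τ (hci _) (hcu _), hcτ, hcτ (n + 1)]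
      ring
  have hone (n : ℕ) : engel x y (2 * k + n) = 1 := by
    ext
    · exact hci _
    · exact hbeyond n
    · rw [show 2 * k + n = 2 * k + n - 2 + 2 by omega]; exact hcτ _
  obtain ⟨m, rfl⟩ := Nat.exists_eq_add_of_le hk
  have Fc : F (sw (2 * (2 + m) + 1)) = engel x y (2 * m + 1 + 2) := by
    rw [← Fs]; congr 2; ring
  rw [show 2 * (2 + m) - 1 = 2 * m + 1 + 2 by omega] at htop
  rintro r (((hr | ⟨j, hj, hjc, rfl⟩) | ⟨j, hj, hjc, rfl⟩) | ⟨n, hn, rfl⟩)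
  · simp only [Set.mem_insert_iff, Set.mem_singleton_iff] at hr
    rcases hr with rfl | rfl | rfl | rfl | rfl | rfl
    · rw [map_mul, map_inv, mul_inv_eq_one, map_fcomm, Fs 0, Fx, Fy]; rfl
    · rw [map_mul, map_inv, mul_inv_eq_one, map_fcomm, Fs 0, Ft, Fy]
    · rw [map_pow, Ft]
      have hv : (fcomm (engel x y 0) y).v = 0 := by
        rw [Model.fcomm_v, hci, hy, Model.diff_zero, Model.diff_zero, sub_zero]
      ext
      · exact Model.cube_i _
      · rw [Model.pow_v (Model.fcomm_i _ _), hv, smul_zero]; rfl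
      · rw [Model.cube_τ, Model.fcomm_i, neg_zero, zero_mul]; rfl
    · rw [map_mul, map_inv, mul_inv_eq_one, map_pow, map_pow, Fc,
        show 2 * (2 + m) + 1 - 2 = 2 * m + 1 + 2 by omega, Fs, hcube,
        show 2 * m + 1 + 3 = 2 * (2 + m) + 0 by ring, hone, mul_one]
    · rw [xRel, map_mul, map_inv, mul_inv_eq_one, map_pow, map_pow, Fc, Fx]
      ext
      · rw [Model.cube_i, Model.pow_i (hci _)]
      · rw [Model.cube_v h1, Model.pow_v (hci _), htop, ← map_nsmul]
        simp [hxd]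
      · rw [Model.cube_τ, Model.pow_τ (hci _) (hcu _), hcτ]
        simp [hxd]
    · rw [yRel, map_mul, map_inv, mul_inv_eq_one, map_mul, map_inv, mul_inv_eq_iff_eq_mul,
        map_mul, map_inv, mul_inv_eq_iff_eq_mul, map_pow, map_pow, map_pow, Fc, Fy, Fs 1, Fs 2]
      have hy3 := D.three_smul_eq h1 y.v
      ext
      · rw [Model.cube_i, Model.mul_i, Model.mul_i, Model.pow_i (hci _), Model.pow_i (hci _),
          hci, add_zero, add_zero]
      · rw [Model.mul_v_of_i_eq_zero (Model.pow_i (hci _) _), Model.mul_v_of_i_eq_zero (hci _),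
          Model.pow_v (hci _), Model.pow_v (hci _), Model.pow_v hy, htop, Model.engel_v hy,
          Model.engel_v hy, ← map_nsmul, nsmul_eq_mul]
        change _ = _ + D.diff x.i (D.diff x.i (D.diff x.i y.v)) + _ • D.diff x.i (D.diff x.i y.v)
        rw [show D.up y.v = 1 from D.up_y] at hy3
        linear_combination (norm := module) hy3
      · have h3 : (engel x y 1).τ = 0 := by
          rw [engel, Model.fcomm_τ (hci _) (hcu _)]
          simp [hxd]
        rw [Model.cube_τ, Model.mul_τ_of_i_eq_zero (Model.pow_i (hci _) _),
          Model.mul_τ_of_i_eq_zero (hci _) (hcu _), Model.pow_τ (hci _) (hcu _),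
          Model.pow_τ (hci _) (hcu _), hcτ, hcτ 0, h3, hy]
        · ring
        · rw [Model.pow_v (hci _), map_nsmul, hcu, smul_zero]
  · obtain ⟨n, rfl⟩ := Nat.exists_eq_add_of_le hj
    rw [map_mul, map_inv, mul_inv_eq_one, map_fcomm, Fx,
      show 3 + n - 1 = n + 2 by omega, show 3 + n = n + 1 + 2 by ring, Fs, Fs]
    rfl
  · obtain ⟨n, rfl⟩ := Nat.exists_eq_add_of_le hj
    rw [map_mul, map_inv, mul_inv_eq_one, map_mul, map_pow, map_pow, add_comm 2 n,
      show n + 2 + 3 = n + 3 + 2 by ring, Fs, Fs, Fs, hcube]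
  · obtain ⟨n, rfl⟩ := Nat.exists_eq_add_of_le hn
    refine Eq.trans (FreeGroup.lift_apply_of) ?_
    rw [show 2 * (2 + m) + 1 + 2 + n = 2 * (2 + m) + n + 3 by ring]
    exact hone n

end Main

end GQdef

namespace Layered

variable (k : ℕ)

/-- Multiplication by three as a map from `ZMod (3 ^ k)` to `ZMod (3 ^ (k + 1))`. -/
def triple : ZMod (3 ^ k) →+ ZMod (3 ^ (k + 1)) :=
  ZMod.lift (3 ^ k) ⟨(AddMonoidHom.mulLeft 3).comp (Int.castAddHom _), by
    have h := ZMod.natCast_self (3 ^ (k + 1))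
    push_cast at h
    simp [← h, pow_succ, mul_comm]⟩

lemma triple_intCast (q : ℤ) : triple k q = 3 * q := by
  simp [triple]

/-- The embedding of `ZMod 3` in `ZMod (3 ^ (k + 1))` with `1 ↦ (-3) ^ k`. -/
def socle : ZMod 3 →+ ZMod (3 ^ (k + 1)) :=
  ZMod.lift 3 ⟨(AddMonoidHom.mulLeft ((-3) ^ k)).comp (Int.castAddHom _), by
    have h := ZMod.natCast_self (3 ^ (k + 1))
    push_cast at h
    simp only [AddMonoidHom.coe_comp, Function.comp_apply, Int.coe_castAddHom,
      AddMonoidHom.coe_mulLeft, Nat.cast_ofNat, Int.cast_ofNat]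
    rw [neg_pow, mul_assoc, ← pow_succ, h, mul_zero]⟩

lemma socle_intCast (q : ℤ) : socle k q = (-3) ^ k * q := by
  simp [socle]

lemma socle_injective : Function.Injective (socle k) := by
  rw [injective_iff_map_eq_zero]
  intro a ha
  obtain ⟨q, rfl⟩ := ZMod.intCast_surjective a
  rw [socle_intCast] at ha
  have h : (((-3) ^ k * q : ℤ) : ZMod (3 ^ (k + 1))) = 0 := by push_cast; exact ha
  rw [ZMod.intCast_zmod_eq_zero_iff_dvd, neg_pow, mul_assoc, mul_left_comm] at h
  push_cast at h
  rw [pow_succ] at h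
  have h2 := Int.dvd_of_mul_dvd_mul_left (by positivity) h
  rw [ZMod.intCast_zmod_eq_zero_iff_dvd]
  exact (IsUnit.dvd_mul_left (IsUnit.pow k (by simp))).1 h2

/-- The reduction map `ZMod (3 ^ (k + 1)) → ZMod (3 ^ k)`. -/
def reduce : ZMod (3 ^ (k + 1)) →+ ZMod (3 ^ k) :=
  (ZMod.castHom (pow_dvd_pow 3 k.le_succ) _).toAddMonoidHom

lemma reduce_intCast (p : ℤ) : reduce k p = p :=
  map_intCast (ZMod.castHom (pow_dvd_pow 3 k.le_succ) _) p

/-- The reduction map `ZMod (3 ^ (k + 1)) → ZMod 3`. -/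
def residue : ZMod (3 ^ (k + 1)) →+ ZMod 3 :=
  (ZMod.castHom (dvd_pow_self 3 k.succ_ne_zero) _).toAddMonoidHom

lemma residue_intCast (p : ℤ) : residue k p = p :=
  map_intCast (ZMod.castHom (dvd_pow_self 3 k.succ_ne_zero) _) p

/-- The endomorphism `(p, q) ↦ (-3 * u * (p + q), p)` with `u = 1 + (-3) ^ k * b`. -/
def shift (b : ℕ) : AddMonoid.End (ZMod (3 ^ (k + 1 + 1)) × ZMod (3 ^ (k + 1))) :=
  AddMonoidHom.prod
    ((AddMonoidHom.mulLeft (-(1 + (-3) ^ k * (b : ZMod (3 ^ (k + 1 + 1)))))).comp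
      (AddMonoidHom.coprod (AddMonoidHom.mulLeft 3) (triple (k + 1))))
    ((reduce (k + 1)).comp (AddMonoidHom.fst _ _))

lemma shift_apply (b : ℕ) (p : ZMod (3 ^ (k + 1 + 1))) (q : ZMod (3 ^ (k + 1))) :
    shift k b (p, q) = (-(1 + (-3) ^ k * (b : ZMod (3 ^ (k + 1 + 1)))) * (3 * p + triple (k + 1) q),
      reduce (k + 1) p) := rfl

lemma neg_three_pow_eq_zero (n : ℕ) : (-3 : ZMod (3 ^ n)) ^ n = 0 := by
  have h := ZMod.natCast_self (3 ^ n)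
  push_cast at h
  rw [neg_pow, h, mul_zero]

lemma forall_intCast {m n : ℕ} {P : ZMod m × ZMod n → Prop}
    (h : ∀ p q : ℤ, P ((p : ZMod m), (q : ZMod n))) (v : ZMod m × ZMod n) : P v := by
  obtain ⟨p, q⟩ := v
  obtain ⟨p, rfl⟩ := ZMod.intCast_surjective p
  obtain ⟨q, rfl⟩ := ZMod.intCast_surjective q
  exact h p q

lemma shift_intCast (b : ℕ) (p q : ℤ) :
    shift k b ((p : ZMod (3 ^ (k + 1 + 1))), (q : ZMod (3 ^ (k + 1)))) =
      (((-(1 + (-3) ^ k * b) * (3 * p + 3 * q) : ℤ) : ZMod (3 ^ (k + 1 + 1))),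
        (p : ZMod (3 ^ (k + 1)))) := by
  rw [shift_apply, triple_intCast, reduce_intCast]
  push_cast
  rfl

/-- A layered structure on `ZMod (3 ^ (k + 2)) × ZMod (3 ^ (k + 1))`. -/
def concrete (b : ℕ) :
    Layered (ZMod (3 ^ (k + 1 + 1)) × ZMod (3 ^ (k + 1))) (k + 1) (b : ZMod 3) where
  X := shift k b
  up := (residue (k + 1)).comp (AddMonoidHom.fst _ _)
  ep := AddMonoidHom.coprod (residue (k + 1)) (residue k)
  zh := (AddMonoidHom.inl _ _).comp (socle (k + 1))
  y := (((1 : ℤ) : ZMod (3 ^ (k + 1 + 1))), 0)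
  up_y := by
    change residue (k + 1) ((1 : ℤ) : ZMod (3 ^ (k + 1 + 1))) = 1
    rw [residue_intCast, Int.cast_one]
  up_X := forall_intCast fun p q => by
    rw [shift_intCast]
    change residue (k + 1) ((_ : ℤ) : ZMod (3 ^ (k + 1 + 1))) = 0
    rw [residue_intCast]
    push_cast
    linear_combination (-(1 + (-3) ^ k * (b : ZMod 3)) * (p + q)) * Model.three_eq_zero
  ep_X := forall_intCast fun p q => by
    rw [shift_intCast]
    change residue (k + 1) ((_ : ℤ) : ZMod (3 ^ (k + 1 + 1))) +
      residue k ((_ : ℤ) : ZMod (3 ^ (k + 1))) = residue (k + 1) ((_ : ℤ) : ZMod (3 ^ (k + 1 + 1)))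
    rw [residue_intCast, residue_intCast, residue_intCast]
    push_cast
    linear_combination (-(1 + (-3) ^ k * (b : ZMod 3)) * (p + q)) * Model.three_eq_zero
  up_zh a := by
    obtain ⟨a, rfl⟩ := ZMod.intCast_surjective a
    change residue (k + 1) (socle (k + 1) a) = 0
    rw [socle_intCast]
    have h := residue_intCast (k + 1) ((-3) ^ (k + 1) * a)
    push_cast at h
    rw [h]
    linear_combination (-(-3) ^ k * (a : ZMod 3)) * Model.three_eq_zero
  ep_zh a := by
    obtain ⟨a, rfl⟩ := ZMod.intCast_surjective a
    change residue (k + 1) (socle (k + 1) a) + residue k 0 = 0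
    rw [socle_intCast, map_zero]
    have h := residue_intCast (k + 1) ((-3) ^ (k + 1) * a)
    push_cast at h
    rw [h]
    linear_combination (-(-3) ^ k * (a : ZMod 3)) * Model.three_eq_zero
  X_zh a := by
    obtain ⟨a, rfl⟩ := ZMod.intCast_surjective a
    change shift k b (socle (k + 1) a, 0) = 0
    have h1 := neg_three_pow_eq_zero (k + 1 + 1)
    have h2 := neg_three_pow_eq_zero (k + 1)
    have h := reduce_intCast (k + 1) ((-3) ^ (k + 1) * a)
    push_cast at h
    rw [shift_apply, socle_intCast, map_zero, h]
    ext
    · change _ = (0 : ZMod (3 ^ (k + 1 + 1)))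
      linear_combination ((1 + (-3) ^ k * (b : ZMod (3 ^ (k + 1 + 1)))) * a) * h1
    · change _ = (0 : ZMod (3 ^ (k + 1)))
      linear_combination (a : ZMod (3 ^ (k + 1))) * h2
  zh_inj a a' h := socle_injective (k + 1) (congrArg Prod.fst h)
  X_X := forall_intCast fun p q => by
    have h1 := neg_three_pow_eq_zero (k + 1 + 1)
    have h2 := neg_three_pow_eq_zero (k + 1)
    rw [shift_intCast, shift_intCast]
    change _ = _ + (socle (k + 1) ((b : ZMod 3) * residue (k + 1) p), 0)
    have h := socle_intCast (k + 1) (b * p)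
    push_cast at h
    rw [residue_intCast, h]
    ext
    · simp only [Prod.fst_add, Prod.fst_neg, Prod.smul_fst]
      rw [zsmul_eq_mul]
      push_cast
      linear_combination ((1 + (-3) ^ k * (b : ZMod (3 ^ (k + 1 + 1)))) * b * (p + q)) * h1
    · simp only [Prod.snd_add, Prod.snd_neg, Prod.smul_snd]
      rw [zsmul_eq_mul]
      push_cast
      linear_combination ((b : ZMod (3 ^ (k + 1))) * (p + q)) * h2
  neg_three_pow := forall_intCast fun p q => by
    have h2 := neg_three_pow_eq_zero (k + 1)
    change _ = (socle (k + 1) (residue (k + 1) p), 0)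
    rw [residue_intCast, socle_intCast]
    ext
    · rw [Prod.smul_fst, zsmul_eq_mul]
      push_cast
      rfl
    · rw [Prod.smul_snd, zsmul_eq_mul]
      push_cast
      rw [h2, zero_mul]

end Layered

namespace GQdef

lemma exists_xRel_of_mem {c : ℕ} {R : FreeGroup ℕ} (hR : R ∈ RxSet c) :
    ∃ a < 2, R = xRel c a := by
  rcases hR with rfl | rfl
  · exact ⟨0, by norm_num, by simp [xRel]⟩
  · exact ⟨1, by norm_num, by simp [xRel]⟩

lemma exists_yRel_of_mem {c : ℕ} {R : FreeGroup ℕ} (hR : R ∈ RySet c) :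
    ∃ b < 3, R = yRel c b := by
  rcases hR with rfl | rfl | rfl
  · exact ⟨0, by norm_num, by simp [yRel]⟩
  · exact ⟨1, by norm_num, by simp [yRel]⟩
  · exact ⟨2, by norm_num, by simp [yRel]⟩

end GQdef

theorem GQ_pairwise_nonisomorphic_of_odd (c : ℕ) (hc : 5 ≤ c) (hodd : Odd c) :
    ∀ Rx ∈ RxSet c, ∀ Ry ∈ RySet c, ∀ Rx' ∈ RxSet c, ∀ Ry' ∈ RySet c,
      (Rx, Ry) ≠ (Rx', Ry') →
        IsEmpty (GQ c Rx Ry ≃* GQ c Rx' Ry') := by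
  intro Rx hRx Ry hRy Rx' hRx' Ry' hRy' hne
  obtain ⟨a, ha, rfl⟩ := exists_xRel_of_mem hRx
  obtain ⟨a', ha', rfl⟩ := exists_xRel_of_mem hRx'
  obtain ⟨b, hb, rfl⟩ := exists_yRel_of_mem hRy
  obtain ⟨b', hb', rfl⟩ := exists_yRel_of_mem hRy'
  obtain ⟨k, rfl⟩ := hodd
  obtain ⟨m, rfl⟩ : ∃ m, k = m + 1 := ⟨k - 1, by omega⟩
  have hk : 2 ≤ m + 1 := by omega
  refine ⟨fun φ => hne ?_⟩
  let F := PresentedGroup.toGroup (image_relations (a := a') (D := Layered.concrete m b') hk)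
  have hrange (n : ℕ) : Model.image (Layered.concrete m b') (a' : ZMod 3) n ∈
      (F.comp φ.toMonoidHom).range :=
    ⟨φ.symm (PresentedGroup.of n), (congrArg F (φ.apply_symm_apply _)).trans
      (PresentedGroup.toGroup.of _)⟩
  obtain ⟨rfl, rfl⟩ := exponents_eq ha ha' hb hb' hk (f := F.comp φ.toMonoidHom)
    ⟨hrange 0, hrange 1⟩
  rfl
end

section
/- Fix an even integer c ≥ 6. Then for each fixed R_x ∈ {x³, x³·s_c⁻¹}, the group G_Q(c, R_x, y³·s₃⁻²·s₄⁻¹·s_c⁻¹) is isomorphic to the group G_Q(c, R_x, y³·s₃⁻²·s₄⁻¹·s_c⁻²); moreover the four groups G_Q(c, x³, y³·s₃⁻²·s₄⁻¹), G_Q(c, x³·s_c⁻¹, y³·s₃⁻²·s₄⁻¹), G_Q(c, x³, y³·s₃⁻²·s₄⁻¹·s_c⁻¹), G_Q(c, x³·s_c⁻¹, y³·s₃⁻²·s₄⁻¹·s_c⁻¹) are pairwise non-isomorphic. -/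
open GQdef

namespace GQdef

/-- The relator word `R_y = y³·s₃⁻²·s₄⁻¹`. -/
def Ry0 : FreeGroup ℕ := yw ^ 3 * (sw 3 ^ 2)⁻¹ * (sw 4)⁻¹

/-- The relator word `R_y = y³·s₃⁻²·s₄⁻¹·s_c⁻¹`. -/
def Ry1 (c : ℕ) : FreeGroup ℕ := yw ^ 3 * (sw 3 ^ 2)⁻¹ * (sw 4)⁻¹ * (sw c)⁻¹

/-- The relator word `R_y = y³·s₃⁻²·s₄⁻¹·s_c⁻²`. -/
def Ry2 (c : ℕ) : FreeGroup ℕ := yw ^ 3 * (sw 3 ^ 2)⁻¹ * (sw 4)⁻¹ * (sw c ^ 2)⁻¹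

end GQdef

/-- Data of a tail `s_2, s_3, …, s_c` on which `φ` acts by `s_j ↦ s_j s_{j+1}`. -/
structure Tail {G : Type*} [Group G] (φ : G →* G) (s : ℕ → G) (c : ℕ) : Prop where
  shift : ∀ j, 2 ≤ j → φ (s j) = s j * s (j + 1)
  cube : ∀ j, 2 ≤ j → s j ^ 3 = s (j + 2) ^ 2 * s (j + 3)
  top : ∀ j, c < j → s j = 1

namespace Tail

variable {G : Type*} [Group G] {φ : G →* G} {s : ℕ → G} {c : ℕ}

theorem norm_eq_one (T : Tail φ s c) {i₀ : ℕ} (h₀ : 2 ≤ i₀)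
    (hs : ∀ i j, i₀ ≤ i → i₀ ≤ j → Commute (s i) (s j)) (i : ℕ) (hi : i₀ ≤ i) :
    s i ^ 3 * s (i + 1) ^ 3 * s (i + 2) = 1 := by
  induction hn : c + 1 - i using Nat.strong_induction_on generalizing i with
  | _ n ih =>
    by_cases hic : c < i
    · simp [T.top i hic, T.top (i + 1) (by omega), T.top (i + 2) (by omega)]
    · have h := ih (c + 1 - (i + 2)) (by omega) (i + 2) (by omega) rfl
      rw [T.cube i (by omega), T.cube (i + 1) (by omega)]
      rw [← h]
      have h1 := (hs (i + 2) (i + 3) (by omega) (by omega)).eq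
      have h2 := (hs (i + 2) (i + 4) (by omega) (by omega)).eq
      have e1 : ∀ X, s (i + 3) * (s (i + 2) * X) = s (i + 2) * (s (i + 3) * X) := fun X => by
        rw [← mul_assoc, ← h1, mul_assoc]
      have e2 : ∀ X, s (i + 4) * (s (i + 2) * X) = s (i + 2) * (s (i + 4) * X) := fun X => by
        rw [← mul_assoc, ← h2, mul_assoc]
      simp only [pow_succ, pow_zero, one_mul, mul_assoc, e1, h2.symm]

theorem commute_of_commute_sq_mul (T : Tail φ s c) {i₀ : ℕ} (h₀ : 2 ≤ i₀) {g : G}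
    (hg : ∀ i, i₀ ≤ i → Commute g (s i ^ 2 * s (i + 1))) (i : ℕ) (hi : i₀ ≤ i) :
    Commute g (s i) := by
  induction hn : c + 1 - i using Nat.strong_induction_on generalizing i with
  | _ n ih =>
    by_cases hic : c < i
    · simp [T.top i hic]
    · have h1 := ih (c + 1 - (i + 1)) (by omega) (i + 1) (by omega) rfl
      have h2 : Commute g (s i ^ 2) := by
        have := (hg i hi).mul_right h1.inv_right
        rwa [mul_inv_cancel_right] at this
      have h3 : Commute g (s i ^ 3) := by
        rw [T.cube i (by omega)]
        exact hg (i + 2) (by omega)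
      have := h3.mul_right h2.inv_right
      rwa [pow_succ (s i) 2, (Commute.refl (s i)).pow_left 2 |>.eq, mul_inv_cancel_right] at this

/-- The map `φ` acts on the products `s i ^ 2 * s (i + 1)` by the same shift rule. -/
theorem map_sq_mul (T : Tail φ s c) {i₀ : ℕ} (h₀ : 2 ≤ i₀)
    (hs : ∀ i j, i₀ ≤ i → i₀ ≤ j → Commute (s i) (s j)) (i : ℕ) (hi : i₀ ≤ i) :
    φ (s i ^ 2 * s (i + 1)) = (s i ^ 2 * s (i + 1)) * (s (i + 1) ^ 2 * s (i + 2)) := by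
  have h1 := (hs i (i + 1) (by omega) (by omega)).eq
  have e1 : ∀ X, s (i + 1) * (s i * X) = s i * (s (i + 1) * X) := fun X => by
    rw [← mul_assoc, ← h1, mul_assoc]
  simp only [map_mul, map_pow, T.shift i (by omega), T.shift (i + 1) (by omega)]
  simp only [pow_succ, pow_zero, one_mul, mul_assoc, e1]

end Tail

/-- If `(pb)³ = p³b³` and `(pb²)³ = p³b⁶`, and `b` commutes with `p³`, then `[b,p]` is central in
`⟨p, b⟩` of exponent three. -/
theorem exists_mul_eq_of_mul_pow_three {G : Type*} [Group G] {p b : G}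
    (h1 : (p * b) ^ 3 = p ^ 3 * b ^ 3) (h2 : (p * b ^ 2) ^ 3 = p ^ 3 * b ^ 6)
    (h3 : Commute b (p ^ 3)) :
    ∃ m, b * p = p * b * m ∧ Commute m b ∧ Commute m p ∧ m ^ 3 = 1 := by
  obtain ⟨B, hB⟩ : ∃ B, B = p⁻¹ * b * p := ⟨_, rfl⟩
  obtain ⟨C, hC⟩ : ∃ C, C = p⁻¹ * B * p := ⟨_, rfl⟩
  have hCp : p⁻¹ * C * p = b := by
    rw [hC, hB]
    calc _ = (p ^ 3)⁻¹ * (b * p ^ 3) := by simp [pow_succ, mul_assoc]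
      _ = b := by rw [h3.eq]; group
  have e1 : C * B = b ^ 2 := by
    have : p ^ 3 * (C * B * b) = p ^ 3 * b ^ 3 := by rw [← h1, hC, hB]; simp [pow_succ, mul_assoc]
    have := mul_left_cancel this
    rw [pow_succ b 2] at this
    exact mul_right_cancel this
  have e2 : C ^ 2 * B ^ 2 = b ^ 4 := by
    have : p ^ 3 * (C ^ 2 * B ^ 2 * b ^ 2) = p ^ 3 * b ^ 6 := by
      rw [← h2, hC, hB]; simp [pow_succ, mul_assoc]
    have := mul_left_cancel this
    rw [pow_add b 4 2] at this
    exact mul_right_cancel this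
  have hcomm : C * B = B * C := by
    have : C * (C * B) * B = C * (B * C) * B := by
      calc _ = C ^ 2 * B ^ 2 := by simp [pow_succ, mul_assoc]
        _ = (C * B) * (C * B) := by rw [e2, e1, ← pow_add]
        _ = _ := by simp [mul_assoc]
    exact mul_left_cancel (mul_right_cancel this)
  have hbC : b * C = C * b := by
    calc b * C = (p⁻¹ * C * p) * (p⁻¹ * B * p) := by rw [hCp, ← hC]
      _ = (p⁻¹ * B * p) * (p⁻¹ * C * p) := by
        calc _ = p⁻¹ * (C * B) * p := by simp [mul_assoc]
          _ = _ := by rw [hcomm]; simp [mul_assoc]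
      _ = _ := by rw [hCp, ← hC]
  have hbB : Commute b B := by
    have hB' : B = C⁻¹ * b ^ 2 := by rw [← e1]; group
    rw [hB']
    exact (show Commute b C from hbC).inv_right.mul_right ((Commute.refl b).pow_right 2)
  have hm : Commute (b⁻¹ * B) b := (Commute.refl b).inv_left.mul_left hbB.symm
  have hC' : C = b ^ 2 * B⁻¹ := by rw [← e1]; group
  have hbp : b * p = p * B := by rw [hB]; group
  have hB2 : B = b * (b⁻¹ * B) := by group
  generalize b⁻¹ * B = m at hB2 hm
  subst hB2
  have hC2 : C = b * m⁻¹ := by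
    rw [hC', ← hm.eq]
    group
  have hm3 : m ^ 3 = 1 := by
    have h : p⁻¹ * (C * (b * m)) * p = p⁻¹ * b ^ 2 * p := by rw [e1, mul_assoc]
    have h' : b * C = (b * m) * (b * m) := by
      calc b * C = (p⁻¹ * C * p) * (p⁻¹ * (b * m) * p) := by rw [hCp, ← hC]
        _ = p⁻¹ * b ^ 2 * p := by rw [← h]; simp [mul_assoc]
        _ = _ := by rw [hB]; simp [pow_two, mul_assoc]
    rw [hC2, mul_assoc b m, ← mul_assoc m b m, hm.eq] at h'
    have h'' : m⁻¹ = m * m := mul_left_cancel (mul_left_cancel (h'.trans (by rw [mul_assoc b m m])))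
    rw [pow_succ, pow_two, ← h'', inv_mul_cancel]
  refine ⟨m, by rw [hbp, mul_assoc], hm, ?_, hm3⟩
  have h : C = p⁻¹ * b * p * (p⁻¹ * m * p) := by rw [hC]; simp [mul_assoc]
  rw [← hB, hC2, mul_assoc] at h
  have h4 : m⁻¹ = m * (p⁻¹ * m * p) := mul_left_cancel h
  have h5 : m⁻¹ = m * m := by
    rw [inv_eq_iff_mul_eq_one, ← mul_assoc, ← pow_three', hm3]
  have h6 : m = p⁻¹ * m * p := mul_left_cancel (h5.symm.trans h4)
  rw [Commute, SemiconjBy]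
  conv_rhs => rw [h6]
  simp [mul_assoc]

namespace Tail

variable {G : Type*} [Group G] {φ : G →* G} {s : ℕ → G} {c : ℕ}

/-- If `φ g = g h` with `h` commuting with the tail, then commutation of `g` with one element
`s_i² s_{i+1}` propagates to all later ones, hence `g` commutes with the tail from `s_i` on. -/
theorem commute_of_commute_map (T : Tail φ s c) {i₀ : ℕ} (h₀ : 2 ≤ i₀)
    (hs : ∀ i j, i₀ ≤ i → i₀ ≤ j → Commute (s i) (s j)) {g h : G} (hg : φ g = g * h)
    (hh : ∀ i, i₀ ≤ i → Commute h (s i)) (hgi : Commute g (s i₀ ^ 2 * s (i₀ + 1)))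
    (i : ℕ) (hi : i₀ ≤ i) : Commute g (s i) := by
  refine T.commute_of_commute_sq_mul h₀ (fun i hi => ?_) i hi
  have hhD : ∀ k, i₀ ≤ k → Commute h (s k ^ 2 * s (k + 1)) := fun k hk =>
    ((hh k hk).pow_right 2).mul_right (hh (k + 1) (by omega))
  induction i, hi using Nat.le_induction with
  | base => exact hgi
  | succ k hk ih =>
    have h1 := ih.map φ
    rw [hg, T.map_sq_mul h₀ hs k hk] at h1
    have h2 : Commute (g * h) (s k ^ 2 * s (k + 1)) := ih.mul_left (hhD k hk)
    have h3 : Commute (g * h) (s (k + 1) ^ 2 * s (k + 1 + 1)) := by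
      have := h2.inv_right.mul_right h1
      rwa [inv_mul_cancel_left] at this
    have := h3.mul_left (hhD (k + 1) (by omega)).inv_left
    rwa [mul_inv_cancel_right] at this

theorem commute_of_pow_three_eq {p b v w ζ q m D : G} (hp : φ p = p * b) (hb : φ b = b * v)
    (hq : φ q = q * p) (hq3 : q ^ 3 = b ^ 2 * v * ζ) (hζ : φ ζ = ζ)
    (hv : φ v = v * w) (hvw : φ (v ^ 2 * w) = v ^ 2 * w * D)
    (hbp : b * p = p * b * m) (hmb : Commute m b) (hmp : Commute m p) (hmv : Commute m v)
    (hmw : Commute m w) (hmζ : Commute m ζ) (hm : m ^ 3 = 1) (hpv : Commute p v)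
    (hpw : Commute p w) (hpζ : Commute p ζ) (hbv : Commute b v) (hvζ : Commute v ζ)
    (hwζ : Commute w ζ) (hmD : Commute m D)
    (hpD : Commute p D) : Commute q D := by
  have hbp' : ∀ X, b * (p * X) = p * (b * (m * X)) := fun X => by
    rw [← mul_assoc, hbp, mul_assoc, mul_assoc]
  have hφm : φ m = m := by
    have h : φ (b * p) = φ (p * b * m) := by rw [hbp]
    have h' : φ (b * p) = p * b * (b * v) * m := by
      simp only [map_mul, hp, hb, mul_assoc, hpv.symm.left_comm, hbp', hmb.left_comm,
        hbv.symm.eq, hmv.eq]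
    rw [h', map_mul, map_mul, hp, hb] at h
    exact (mul_left_cancel h).symm
  have hφβ : φ (b ^ 2 * v * ζ) = b ^ 2 * v * ζ * (v ^ 2 * w) := by
    simp only [map_mul, hζ, hb, hv, pow_succ, pow_zero, one_mul, mul_assoc,
      hbv.symm.left_comm, hvζ.symm.left_comm, hwζ.eq]
  have hpβ : p * (b ^ 2 * v * ζ) = b ^ 2 * v * ζ * p * m := by
    have h1 : b ^ 2 * p * m = p * b ^ 2 := by
      have : b ^ 2 * p * m = p * b ^ 2 * m ^ 3 := by
        simp only [pow_succ, pow_zero, one_mul, mul_assoc, hbp', hmb.left_comm]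
      rw [this, hm, mul_one]
    calc p * (b ^ 2 * v * ζ) = p * b ^ 2 * (v * ζ) := by simp only [mul_assoc]
      _ = b ^ 2 * (p * (m * (v * ζ))) := by rw [← h1]; simp only [mul_assoc]
      _ = b ^ 2 * (v * ζ * (p * m)) := by
        rw [← mul_assoc p m, ((hpv.mul_right hpζ).mul_left (hmv.mul_right hmζ)).eq]
      _ = _ := by simp only [mul_assoc]
  have hEp : Commute (v ^ 2 * w) p := ((hpv.pow_right 2).mul_right hpw).symm
  have hEm : Commute (v ^ 2 * w) m := ((hmv.pow_right 2).mul_right hmw).symm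
  have hβq : q * (b ^ 2 * v * ζ) = b ^ 2 * v * ζ * q := by rw [← hq3, ← pow_succ, ← pow_succ']
  have hβq' := congrArg φ hβq
  rw [map_mul, map_mul φ _ q, hφβ, hq] at hβq'
  generalize b ^ 2 * v * ζ = β at *
  generalize v ^ 2 * w = E at *
  have hE : E * q = q * (E * m) := by
    have h1 : q * p * (β * E) = β * (q * (E * m)) * p := by
      calc q * p * (β * E) = q * (p * β) * E := by simp only [mul_assoc]
        _ = q * β * (p * m * E) := by rw [hpβ]; simp only [mul_assoc]
        _ = β * q * (p * m * E) := by rw [hβq]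
        _ = β * (q * (E * m)) * p := by
          rw [← (hEp.mul_right hEm).eq, ← hmp.eq]; simp only [mul_assoc]
    rw [h1] at hβq'
    have h2 : β * (q * (E * m)) * p = β * (E * q) * p := by rw [hβq']; simp only [mul_assoc]
    exact (mul_left_cancel (mul_right_cancel h2)).symm
  have h := congrArg φ hE
  rw [map_mul, map_mul φ q, map_mul φ E, hvw, hq, hφm] at h
  have h2 : E * (D * q) * p = E * (q * D) * p := by
    calc E * (D * q) * p = E * D * (q * p) := by simp only [mul_assoc]
      _ = q * p * (E * D * m) := h
      _ = q * (p * (E * (m * D))) := by rw [hmD.eq]; simp only [mul_assoc]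
      _ = q * (E * m) * (p * D) := by
        rw [← hEp.left_comm, ← hmp.left_comm]; simp only [mul_assoc]
      _ = _ := by rw [← hE, hpD.eq]; simp only [mul_assoc]
  exact (mul_left_cancel (mul_right_cancel h2)).symm

theorem commute_of_commute_succ (T : Tail φ s c) {j : ℕ} (hj : 2 ≤ j) (hjc : j + 3 ≤ c)
    (hs : ∀ i k, j + 1 ≤ i → j + 1 ≤ k → Commute (s i) (s k))
    (h3 : ∀ g, φ (φ (φ g)) = (s c)⁻¹ * g * s c) {q : G} (hq : φ q = q * s j) {k : ℕ}
    (hqc : q ^ 3 = s (j + 1) ^ 2 * s (j + 2) * s c ^ k) (i : ℕ) (hi : j ≤ i) :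
    Commute (s j) (s i) := by
  have hpφ := T.shift j hj
  have hbφ := T.shift (j + 1) (by omega)
  have hvφ := T.shift (j + 2) (by omega)
  have hzφ : φ (s c) = s c := by rw [T.shift c (by omega), T.top (c + 1) (by omega), mul_one]
  have hpc := T.cube j hj
  have hbc := T.cube (j + 1) (by omega)
  have hN := T.norm_eq_one (by omega) hs (j + 1) le_rfl
  have hD1 := T.map_sq_mul (by omega) hs (j + 2) (by omega)
  have hbv := hs (j + 1) (j + 2) (by omega) (by omega)
  have hbv2 := hs (j + 1) (j + 3) (by omega) (by omega)
  have hvv2 := hs (j + 2) (j + 3) (by omega) (by omega)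
  have hvz := hs (j + 2) c (by omega) (by omega)
  -- `s j` commutes with the tail from `s (j + 2)` on
  have hpv : ∀ i, j + 2 ≤ i → Commute (s j) (s i) :=
    T.commute_of_commute_map (by omega) (fun a b ha hb => hs a b (by omega) (by omega)) hpφ
      (fun a ha => hs _ _ (by omega) (by omega))
      (by rw [← hpc]; exact (Commute.refl _).pow_right 3)
  have hD1' : s j ^ 3 * s (j + 1) ^ 3 = (s j * s (j + 1)) ^ 3 := by
    have := congrArg φ hpc
    rw [map_pow, hpφ, hD1, ← hpc, ← hbc] at this
    exact this.symm
  have hD2' : φ (s (j + 1) ^ 3) = s (j + 1) ^ 3 * s (j + 2) ^ 3 := by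
    rw [map_pow, hbφ, hbv.mul_pow]
  have hpb2 : (s j * s (j + 1) ^ 2) ^ 3 = s j ^ 3 * s (j + 1) ^ 6 := by
    have := congrArg φ hD1'
    rw [map_mul, hD2', map_pow, map_pow, map_mul, hpφ, hbφ, ← hD1', ← mul_assoc, ← mul_assoc,
      mul_assoc (s j),
      ← pow_two, (((hpv (j + 2) le_rfl).mul_left (hbv.pow_left 2))).mul_pow,
      mul_assoc (s j ^ 3), ← pow_add] at this
    exact (mul_right_cancel this).symm
  obtain ⟨m, hbp, hmb, hmp, hm3⟩ := exists_mul_eq_of_mul_pow_three hD1'.symm hpb2 (by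
    rw [hpc]
    exact (hbv.pow_right 2).mul_right hbv2)
  have hm : m = (s j * s (j + 1))⁻¹ * (s (j + 1) * s j) := by rw [hbp, inv_mul_cancel_left]
  have hmv : ∀ i, j + 2 ≤ i → Commute m (s i) := fun i hi => by
    rw [hm]
    have h1 := hpv i hi
    have h2 := hs (j + 1) i (by omega) (by omega)
    exact (h1.mul_left h2).inv_left.mul_left (h2.mul_left h1)
  have hDq2 : Commute q (s (j + 3) ^ 2 * s (j + 4)) := by
    have h1 := hmv (j + 3) (by omega)
    have h2 := hmv (j + 4) (by omega)
    have h3 := hpv (j + 3) (by omega)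
    have h4 := hpv (j + 4) (by omega)
    exact commute_of_pow_three_eq hpφ hbφ hq hqc (by rw [map_pow, hzφ]) hvφ hD1 hbp hmb hmp
      (hmv _ le_rfl) h1 ((hmv c (by omega)).pow_right k) hm3 (hpv _ le_rfl) h3
      ((hpv c (by omega)).pow_right k) hbv (hvz.pow_right k)
      ((hs (j + 3) c (by omega) (by omega)).pow_right k)
      ((h1.pow_right 2).mul_right h2) ((h3.pow_right 2).mul_right h4)
  have hqv : ∀ i, j + 3 ≤ i → Commute q (s i) :=
    T.commute_of_commute_map (by omega) (fun a b ha hb => hs a b (by omega) (by omega)) hq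
      (fun a ha => hpv _ (by omega)) hDq2
  have hm1 : m = 1 := by
    have h := h3 q
    rw [mul_assoc, (hqv c hjc).eq, inv_mul_cancel_left, hq, map_mul, hq, hpφ, map_mul, map_mul,
      map_mul, hpφ, hbφ, hq] at h
    simp only [mul_assoc] at h
    have h' := mul_eq_left.mp h
    have hbp' : ∀ X, s (j + 1) * (s j * X) = s j * (s (j + 1) * (m * X)) := fun X => by
      rw [← mul_assoc, hbp, mul_assoc, mul_assoc]
    rw [hbp', hmb.left_comm, hmb.left_comm] at h'
    have h4 : s j ^ 3 * s (j + 1) ^ 3 * m * s (j + 2) = 1 := by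
      rw [← h']
      simp only [pow_succ, pow_zero, one_mul, mul_assoc]
    rw [mul_assoc, (hmv (j + 2) le_rfl).eq, ← mul_assoc] at h4
    suffices h5 : s j ^ 3 * s (j + 1) ^ 3 * s (j + 2) = 1 by rwa [h5, one_mul] at h4
    rw [← hN, hpc]
    simp only [pow_succ, pow_zero, one_mul, mul_assoc, hbv.symm.left_comm, hbv2.symm.left_comm,
      hvv2.symm.eq]
  rcases (by omega : i = j ∨ i = j + 1 ∨ j + 2 ≤ i) with rfl | rfl | h
  · exact Commute.refl _
  · rw [hm1, mul_one] at hbp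
    exact hbp.symm
  · exact hpv i h

end Tail

namespace Tail

variable {G : Type*} [Group G] {φ : G →* G} {s : ℕ → G} {c : ℕ}

theorem commute_of_commute_top (T : Tail φ s c) (hc : 5 ≤ c)
    (hs : ∀ i k, c - 2 ≤ i → c - 2 ≤ k → Commute (s i) (s k))
    (h3 : ∀ g, φ (φ (φ g)) = (s c)⁻¹ * g * s c) {y : G} (hy : φ y = y * s 2) {l : ℕ}
    (hy3 : y ^ 3 = s c ^ l * s 4 * s 3 ^ 2) (i k : ℕ) (hi : 2 ≤ i) (hk : 2 ≤ k) :
    Commute (s i) (s k) := by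
  have key : ∀ n, ∀ i k, c - 2 - n ≤ i → c - 2 - n ≤ k → 2 ≤ i → 2 ≤ k →
      Commute (s i) (s k) := by
    intro n
    induction n with
    | zero => exact fun i k hi hk _ _ => hs i k hi hk
    | succ n ih =>
      obtain hn | hn : c - 2 - n ≤ 2 ∨ 2 < c - 2 - n := by omega
      · exact fun i k _ _ hi hk => ih i k (by omega) (by omega) hi hk
      · obtain ⟨j, hj⟩ : ∃ j, c - 2 - (n + 1) = j := ⟨_, rfl⟩
        have hs' : ∀ i k, j + 1 ≤ i → j + 1 ≤ k → Commute (s i) (s k) := fun i k hi hk =>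
          ih i k (by omega) (by omega) (by omega) (by omega)
        have hj' : ∀ i, j ≤ i → Commute (s j) (s i) := by
          obtain rfl | hj2 : j = 2 ∨ 3 ≤ j := by omega
          · exact T.commute_of_commute_succ le_rfl (by omega) hs' h3 hy
              (hy3.trans (by
                have h34 := hs' 3 4 le_rfl (by omega)
                have h3c := hs' 3 c le_rfl (by omega)
                have h4c := hs' 4 c (by omega) (by omega)
                rw [(h4c.symm.pow_left l).eq,
                  ← ((h34.mul_right (h3c.pow_right l)).pow_left 2).eq, mul_assoc]))
          · obtain ⟨j, rfl⟩ : ∃ j', j = j' + 1 := ⟨j - 1, by omega⟩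
            exact T.commute_of_commute_succ (by omega) (by omega) hs' h3
              (T.shift j (by omega)) (k := 0) (by rw [pow_zero, mul_one, T.cube j (by omega)])
        rw [hj]
        intro i k hi hk _ _
        obtain rfl | hi := hi.eq_or_lt
        · exact hj' k hk
        · obtain rfl | hk := hk.eq_or_lt
          · exact (hj' i hi.le).symm
          · exact hs' i k hi hk
  exact key c i k (by omega) (by omega) hi hk

theorem commute_of_pow_three (T : Tail φ s c) (hc : 5 ≤ c)
    (hs : ∀ i k, 2 ≤ i → 2 ≤ k → Commute (s i) (s k)) {y : G} (hy : φ y = y * s 2) {l : ℕ}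
    (hy3 : y ^ 3 = s 3 ^ 2 * s 4 * s c ^ l) (i : ℕ) (hi : 3 ≤ i) : Commute y (s i) := by
  have hzφ : φ (s c) = s c := by rw [T.shift c (by omega), T.top (c + 1) (by omega), mul_one]
  have hβ : Commute y (s 3 ^ 2 * s 4 * s c ^ l) := by
    rw [← hy3]; exact (Commute.refl y).pow_right 3
  have h2 : ∀ i, 2 ≤ i → Commute (s 2) (s i) := fun i hi => hs 2 i le_rfl hi
  have hD : Commute y (s 4 ^ 2 * s 5) := by
    have h1 := hβ.map φ
    rw [hy, map_mul, map_pow, hzφ, T.map_sq_mul (by omega) hs 3 (by omega), mul_assoc,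
      (((hs 4 c (by omega) (by omega)).pow_left 2).mul_left
        (hs 5 c (by omega) (by omega))).pow_right l |>.eq, ← mul_assoc] at h1
    have h3 : Commute (y * s 2) (s 3 ^ 2 * s 4 * s c ^ l) := hβ.mul_left
      ((((h2 3 (by omega)).pow_right 2).mul_right (h2 4 (by omega))).mul_right
        ((h2 c (by omega)).pow_right l))
    have h4 := h3.inv_right.mul_right h1
    rw [inv_mul_cancel_left] at h4
    have h5 := h4.mul_left
      (((h2 4 (by omega)).pow_right 2).mul_right (h2 5 (by omega))).inv_left
    rwa [mul_inv_cancel_right] at h5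
  have h4 := T.commute_of_commute_map (by omega)
    (fun i j hi hj => hs i j (by omega) (by omega)) hy (fun i hi => h2 i (by omega)) hD
  obtain rfl | hi := hi.eq_or_lt
  · have h5 := (hβ.mul_right ((h4 c (by omega)).pow_right l).inv_right).mul_right
      (h4 4 le_rfl).inv_right
    rw [mul_inv_cancel_right, mul_inv_cancel_right] at h5
    have h6 : Commute y (s 3 ^ 3) := by
      rw [T.cube 3 (by omega)]
      exact ((h4 5 (by omega)).pow_right 2).mul_right (h4 6 (by omega))
    have h7 := h5.inv_right.mul_right h6
    rwa [pow_succ (s 3) 2, inv_mul_cancel_left] at h7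
  · exact h4 i hi

theorem exists_mul_eq_of_pow_three (T : Tail φ s c) (hc : 5 ≤ c)
    (hs : ∀ i k, 2 ≤ i → 2 ≤ k → Commute (s i) (s k)) {y : G} (hy : φ y = y * s 2) {l : ℕ}
    (hy3 : y ^ 3 = s 3 ^ 2 * s 4 * s c ^ l) :
    ∃ t, s 2 * y = y * s 2 * t ∧ Commute t (s 2) ∧ Commute t y ∧ t ^ 3 = 1 ∧ φ t = t ∧
      ∀ i, 2 ≤ i → Commute t (s i) := by
  have hys := T.commute_of_pow_three hc hs hy hy3
  have hzφ : φ (s c) = s c := by rw [T.shift c (by omega), T.top (c + 1) (by omega), mul_one]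
  have h23 := hs 2 3 le_rfl (by omega)
  have hφ1 : (y * s 2) ^ 3 = y ^ 3 * s 2 ^ 3 := by
    rw [← hy, ← map_pow, hy3, map_mul, map_pow, hzφ, T.map_sq_mul (by omega) hs 3 (by omega),
      T.cube 2 le_rfl, mul_assoc, mul_assoc (s 3 ^ 2 * s 4),
      (((hs 4 c (by omega) (by omega)).pow_left 2).mul_left
        (hs 5 c (by omega) (by omega))).pow_right l |>.eq]
  have hφ2 : (y * s 2 ^ 2) ^ 3 = y ^ 3 * s 2 ^ 6 := by
    have h := congrArg φ hφ1
    rw [map_mul, map_pow, map_mul, map_pow, map_pow, hy, hφ1, T.shift 2 le_rfl, h23.mul_pow,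
      ← mul_assoc, ← mul_assoc, mul_assoc y, ← pow_two,
      ((hys 3 le_rfl).mul_left (h23.pow_left 2)).mul_pow] at h
    rw [mul_right_cancel h, mul_assoc, ← pow_add]
  obtain ⟨t, h1, h2, h3, h4⟩ := exists_mul_eq_of_mul_pow_three hφ1 hφ2 (by
    rw [hy3]
    exact (((hs 2 3 le_rfl (by omega)).pow_right 2).mul_right (hs 2 4 le_rfl (by omega))).mul_right
      ((hs 2 c le_rfl (by omega)).pow_right l))
  have ht : t = (y * s 2)⁻¹ * (s 2 * y) := by rw [h1, inv_mul_cancel_left]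
  have hts : ∀ i, 3 ≤ i → Commute t (s i) := fun i hi => by
    have h5 := hys i hi
    have h6 := hs 2 i le_rfl (by omega)
    rw [ht]
    exact (h5.mul_left h6).inv_left.mul_left (h6.mul_left h5)
  refine ⟨t, h1, h2, h3, h4, ?_, fun i hi => ?_⟩
  · have h : φ (s 2 * y) = y * s 2 * (s 2 * s 3) * t := by
      have h1' : ∀ X, s 2 * (y * X) = y * (s 2 * (t * X)) := fun X => by
        rw [← mul_assoc, h1, mul_assoc, mul_assoc]
      simp only [map_mul, hy, T.shift 2 le_rfl, mul_assoc, (hys 3 le_rfl).symm.left_comm, h1',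
        h2.left_comm, h23.symm.eq, (hts 3 le_rfl).eq]
    rw [h1, map_mul, map_mul, hy, T.shift 2 le_rfl] at h
    exact mul_left_cancel h
  · obtain rfl | hi := hi.eq_or_lt
    · exact h2
    · exact hts i hi

end Tail

section TopCommute

variable {G : Type*} [Group G] {φ : G →* G} {z v u w q : G}

theorem top_pow_three_and_commute (h3 : ∀ g, φ (φ (φ g)) = z⁻¹ * g * z) (hz : φ z = z)
    (hv : φ v = v * z) (hu : φ u = u * v) (hu3 : u ^ 3 = z ^ 2) :
    z ^ 3 = 1 ∧ Commute z v ∧ Commute z u ∧ v ^ 3 = 1 := by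
  have h1 : v * z ^ 3 = z⁻¹ * v * z := by
    rw [← h3 v]
    simp [hv, hz, pow_succ, mul_assoc]
  have h2 : z * v = v * (z ^ 2)⁻¹ := by
    have h : z * (v * z ^ 3) = v * z := by rw [h1]; group
    have h' : z * (v * z ^ 3) * (z ^ 3)⁻¹ = v * z * (z ^ 3)⁻¹ := by rw [h]
    rw [mul_assoc, mul_inv_cancel_right] at h'
    rw [h']; simp [pow_succ, mul_assoc]
  have h4 : Commute u (z ^ 2) := by rw [← hu3]; exact (Commute.refl u).pow_right 3
  have h5 : Commute v (z ^ 2) := by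
    have h := h4.map φ
    rw [hu, map_pow, hz] at h
    have := h4.inv_left.mul_left h
    rwa [inv_mul_cancel_left] at this
  have h6 : SemiconjBy v (z ^ 2)⁻¹ z := h2.symm
  have h7 : z ^ 6 = 1 := by
    have h := h6.pow_right 2
    have h' : v * ((z ^ 2)⁻¹ ^ 2) = v * z ^ 2 := h.eq.trans h5.eq.symm
    have h'' := mul_left_cancel h'
    rw [inv_pow, inv_eq_iff_mul_eq_one, ← pow_mul, ← pow_add] at h''
    exact h''
  have h8 : z ^ 3 = 1 := by
    have h := h6.pow_right 3
    rw [inv_pow, ← pow_mul, h7, inv_one] at h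
    have := h.eq
    rw [mul_one] at this
    exact (mul_eq_right.mp this.symm)
  have hzz : (z ^ 2)⁻¹ = z := by rw [inv_eq_iff_mul_eq_one, ← pow_succ, h8]
  have h9 : Commute z v := by rw [hzz] at h2; exact h2
  have h10 : Commute z u := by
    rw [← hzz]
    exact h4.symm.inv_left
  refine ⟨h8, h9, h10, ?_⟩
  have h11 : u * v ^ 3 * z ^ 3 = z⁻¹ * u * z := by
    rw [← h3 u]
    simp only [hu, hv, hz, map_mul, pow_succ, pow_zero, one_mul, mul_assoc, h9.left_comm]
  rw [h8, mul_one, mul_assoc, ← h10.eq, inv_mul_cancel_left] at h11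
  exact mul_eq_left.mp h11

theorem top_exists_mul_eq (hz : φ z = z) (hv : φ v = v * z) (hu : φ u = u * v)
    (hu3 : u ^ 3 = z ^ 2) (hz3 : z ^ 3 = 1) (hzv : Commute z v) (hzu : Commute z u)
    (hv3 : v ^ 3 = 1) :
    ∃ m, v * u = u * v * m ∧ Commute m v ∧ Commute m u ∧ m ^ 3 = 1 ∧ Commute m z ∧ φ m = m := by
  have h1 : (u * v) ^ 3 = u ^ 3 := by rw [← hu, ← map_pow, hu3, map_pow, hz]
  have h2 : (u * v ^ 2) ^ 3 = u ^ 3 := by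
    have h := congrArg φ h1
    rw [map_pow, map_pow, map_mul, hu, hv, h1, ← mul_assoc, mul_assoc u, ← pow_two,
      ((hzu.mul_right (hzv.pow_right 2)).symm).mul_pow, hz3, mul_one] at h
    exact h
  obtain ⟨m, h3, h4, h5, h6⟩ := exists_mul_eq_of_mul_pow_three (p := u) (b := v)
    (by rw [h1, hv3, mul_one]) (by rw [h2, pow_mul v 3 2, hv3, one_pow, mul_one])
    (by rw [hu3]; exact hzv.symm.pow_right 2)
  have hm : m = (u * v)⁻¹ * (v * u) := by rw [h3, inv_mul_cancel_left]
  have hmz : Commute m z := by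
    rw [hm]
    exact (hzu.symm.mul_left hzv.symm).inv_left.mul_left (hzv.symm.mul_left hzu.symm)
  refine ⟨m, h3, h4, h5, h6, hmz, ?_⟩
  have h : φ (v * u) = u * v * (v * z) * m := by
    have h3' : ∀ X, v * (u * X) = u * (v * (m * X)) := fun X => by
      rw [← mul_assoc, h3, mul_assoc, mul_assoc]
    simp only [map_mul, hv, hu, mul_assoc, hzu.left_comm, h3', h4.left_comm, hzv.eq, hmz.symm.eq]
  rw [h3, map_mul, map_mul, hu, hv] at h
  exact mul_left_cancel h
theorem top_exists_conj (hz : φ z = z) (hv : φ v = v * z) (hu : φ u = u * v) (hw : φ w = w * u)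
    (hu3 : u ^ 3 = z ^ 2) (hw3 : w ^ 3 = v ^ 2 * z) (hz3 : z ^ 3 = 1) (hzv : Commute z v)
    (hzu : Commute z u) (hv3 : v ^ 3 = 1) {m : G} (hvu : v * u = u * v * m) (hmv : Commute m v)
    (hmu : Commute m u) (hm3 : m ^ 3 = 1) (hmz : Commute m z) (hmφ : φ m = m) :
    ∃ g, u * w = w * g ∧ Commute u g ∧ v * g = g * v * m ∧ Commute z g ∧ g ^ 3 = z ^ 2 * m := by
  obtain ⟨ψ, hψ⟩ : ∃ ψ : G →* G, ∀ a, a * w = w * ψ a :=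
    ⟨(MulAut.conj w⁻¹).toMonoidHom, fun a => by simp [mul_assoc]⟩
  have hψi : ∀ a b, ψ a = ψ b → a = b := fun a b h => by
    have := (hψ a).trans ((congrArg (w * ·) h).trans (hψ b).symm)
    exact mul_right_cancel this
  have hψφ : ∀ a, ψ (φ a) * u = u * φ (ψ a) := fun a => by
    have h := congrArg φ (hψ a)
    rw [map_mul, map_mul, hw, ← mul_assoc, hψ, mul_assoc, mul_assoc] at h
    exact mul_left_cancel h
  have hw3' : ∀ a, (w * a) ^ 3 = w ^ 3 * (ψ (ψ a) * ψ a * a) := fun a => by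
    calc (w * a) ^ 3 = w * (a * w) * (a * w) * a := by simp [pow_succ, mul_assoc]
      _ = w * w * (ψ a * w) * ψ a * a := by rw [hψ a]; simp [mul_assoc]
      _ = _ := by rw [hψ (ψ a)]; simp [pow_succ, mul_assoc]
  have hψ3 : ∀ a, a * (v ^ 2 * z) = v ^ 2 * z * ψ (ψ (ψ a)) := fun a => by
    rw [← hw3]
    calc a * w ^ 3 = a * w * w * w := by simp [pow_succ, mul_assoc]
      _ = w ^ 3 * ψ (ψ (ψ a)) := by
        rw [hψ a, mul_assoc w, hψ (ψ a), ← mul_assoc, mul_assoc (w * w), hψ (ψ (ψ a))]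
        simp [pow_succ, mul_assoc]
  have hψv : ψ v = v * m⁻¹ := by
    have h : Commute w (v ^ 2 * z) := by rw [← hw3]; exact (Commute.refl w).pow_right 3
    have h1 := h.map φ
    rw [map_mul, map_pow, hv, hz, hw, hzv.symm.mul_pow, mul_assoc, ← pow_succ, hz3, mul_one] at h1
    have h2 := h1.pow_right 2
    rw [← pow_mul, pow_succ v 3, hv3, one_mul] at h2
    have h3 : w * (u * v) = w * (ψ v * u) := by
      rw [← mul_assoc, h2.eq, ← mul_assoc, hψ v, mul_assoc]
    have h4 := mul_left_cancel h3
    rw [eq_mul_inv_iff_mul_eq]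
    have h5 : ψ v * m * u = v * u := by rw [hvu, h4, mul_assoc, mul_assoc, hmu.eq]
    exact mul_right_cancel h5
  have hm2 : m⁻¹ = m ^ 2 := by rw [inv_eq_iff_mul_eq_one, ← pow_succ', hm3]
  have hm2' : m⁻¹ ^ 2 = m := by rw [hm2, ← pow_mul, pow_succ m 3, hm3, one_mul]
  have hψz : ψ z = z * m⁻¹ := by
    have h : v ^ 2 * z = ψ (v ^ 2 * z) := by
      have := hψ (w ^ 3)
      rw [← pow_succ, pow_succ', hw3] at this
      exact mul_left_cancel this
    rw [map_mul, map_pow, hψv, hmv.symm.inv_right.mul_pow, mul_assoc] at h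
    have h1 := mul_left_cancel h
    rw [hm2'] at h1
    rw [← hmz.inv_left.eq, eq_inv_mul_iff_mul_eq, ← h1]
  obtain ⟨g, hg⟩ : ∃ g, g = ψ u := ⟨_, rfl⟩
  have hψg : ψ g * g = u ^ 2 := by
    have h := congrArg φ hw3
    rw [map_pow, hw, hw3', map_mul, map_pow, hv, hz, hzv.symm.mul_pow, mul_assoc (v ^ 2),
      ← pow_succ,
      hz3, mul_one, hw3, mul_assoc, mul_eq_left, ← hg] at h
    have h1 : z * (ψ g * g * u) = z * (u ^ 2 * u) := by
      rw [h, ← pow_succ, hu3, ← pow_succ', hz3]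
    exact mul_right_cancel (mul_left_cancel h1)
  have hg3 : g ^ 3 = z ^ 2 * m := by
    rw [hg, ← map_pow, hu3, map_pow, hψz, hmz.symm.inv_right.mul_pow, hm2']
  have hφg : u * φ g = g * u * v := by
    rw [hg, ← hψφ, hu, map_mul, ← hg, hψv, mul_assoc g, mul_assoc v, hmu.inv_left.eq, ← mul_assoc v,
      hvu, mul_inv_cancel_right, mul_assoc]
  obtain ⟨μ, hμ⟩ : ∃ μ, μ = ψ m := ⟨_, rfl⟩
  have hψψz : ψ (ψ z) = z * m⁻¹ * μ⁻¹ := by rw [hψz, map_mul, hψz, map_inv, hμ]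
  have hψψψz : ψ (ψ (ψ z)) = z := by
    have h := hψ3 z
    rw [((hzv.pow_right 2).mul_right (Commute.refl z)).eq] at h
    exact (mul_left_cancel h).symm
  have hzμ : Commute z μ := by
    have h : Commute z (ψ z) := by
      rw [hψz]; exact (Commute.refl z).mul_right hmz.symm.inv_right
    have h1 := (h.map ψ).map ψ
    rw [hψψψz, hψψz, ← hψz] at h1
    have h2 := h.inv_right.mul_right h1.symm
    rw [inv_mul_cancel_left] at h2
    exact inv_inv μ ▸ h2.inv_right
  have hmμ : Commute m μ := by
    have h := hmz.map ψ
    rw [← hμ, hψz] at h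
    have h1 := hzμ.inv_left.mul_left h.symm
    rw [inv_mul_cancel_left] at h1
    exact inv_inv m ▸ h1.inv_left
  have hψμ : ψ μ = m⁻¹ * μ⁻¹ := by
    have h := hψψψz
    rw [hψψz, map_mul, map_mul, hψz, map_inv, map_inv, ← hμ, mul_assoc, mul_assoc, mul_eq_left,
      ← mul_assoc] at h
    exact (mul_inv_eq_one.mp h).symm
  have hμ3 : μ ^ 3 = 1 := by rw [hμ, ← map_pow, hm3, map_one]
  have hμg : Commute μ g := by rw [hμ, hg]; exact hmu.map ψ
  have hμv : Commute μ v := by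
    have h := hmv.map ψ
    rw [← hμ, hψv] at h
    have := h.mul_right hmμ.symm
    rwa [inv_mul_cancel_right] at this
  have hgz' : Commute g (z * m⁻¹) := by rw [hg, ← hψz]; exact hzu.symm.map ψ
  have hμφ : φ μ = μ := by
    have h1 := hψφ m
    rw [← hμ, hmφ, ← hμ] at h1
    have h2 := hψφ μ
    rw [hψμ, map_mul, map_inv, map_inv, hmφ, show φ μ = u⁻¹ * (μ * u) by rw [h1]; group] at h2
    rw [show φ μ = u⁻¹ * (μ * u) by rw [h1]; group]
    apply hψi
    rw [hψμ]
    have h3 : m⁻¹ * μ⁻¹ * u = u * (m⁻¹ * (u⁻¹ * (μ * u))⁻¹) := by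
      rw [← hmu.inv_left.left_comm]; group
    exact mul_right_cancel (h2.trans h3.symm)
  have hμu : Commute μ u := by
    have h1 := hψφ m
    rwa [← hμ, hmφ, ← hμ, hμφ] at h1
  have hmg : Commute m g := by
    have h := hμu.map ψ
    rw [hψμ, ← hg] at h
    have := (h.mul_left hμg).inv_left
    rwa [inv_mul_cancel_right, inv_inv] at this
  have hzg : Commute z g := by
    have := hgz'.symm.mul_left hmg
    rwa [inv_mul_cancel_right] at this
  have hvg : v * g = g * v * μ := by
    have h := congrArg ψ hvu
    rw [map_mul, map_mul, map_mul, ← hg, hψv, ← hμ, mul_assoc, hmg.inv_left.eq, mul_assoc g,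
      mul_assoc v, hmμ.inv_left.eq, ← mul_assoc, ← mul_assoc, ← mul_assoc] at h
    exact mul_right_cancel h
  have hμ2 : μ⁻¹ = μ ^ 2 := by rw [inv_eq_iff_mul_eq_one, ← pow_succ', hμ3]
  have hvg' : ∀ X, v * (g * X) = g * (v * (μ * X)) := fun X => by
    rw [← mul_assoc, hvg, mul_assoc, mul_assoc]
  have hvu' : ∀ X, v * (u * X) = u * (v * (m * X)) := fun X => by
    rw [← mul_assoc, hvu, mul_assoc, mul_assoc]
  have hu2g : u ^ 2 * g * (m ^ 2 * μ) = g * u ^ 2 := by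
    have h := congrArg (fun a => φ (φ a)) hw3
    simp only [map_pow, map_mul, hw, hu, hv, hz] at h
    rw [mul_assoc w, hw3', hw3] at h
    have h1 : (v * z * z) ^ 2 * z = v ^ 2 * z * z := by
      calc _ = v ^ 2 * (z ^ 3 * z * z) := by
            simp only [pow_succ, pow_zero, one_mul, mul_assoc, hzv.left_comm]
        _ = _ := by rw [hz3, one_mul, mul_assoc]
    have h2 := mul_left_cancel (h.trans h1)
    simp only [map_mul, ← hg, hψv, map_inv, ← hμ] at h2
    rw [eq_mul_inv_of_mul_eq hψg] at h2
    have h3 : v * m⁻¹ * μ⁻¹ * (g * (g * (v * m⁻¹))) * (u * (u * v)) =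
        g * g * (u * u) * (m * m * μ) * (m ^ 3 * m ^ 3 * μ ^ 3 * v ^ 3) := by
      simp only [hm2, hμ2, mul_assoc, hvg', hvu', hmg.left_comm, hmu.left_comm, hmv.left_comm,
        hμg.left_comm, hμu.left_comm, hμv.left_comm, hmμ.symm.left_comm, hμv.eq,
        hmμ.symm.eq, pow_succ, pow_zero, one_mul]
    rw [hm3, hμ3, hv3, one_mul, one_mul, one_mul, mul_one] at h3
    have h4 : u ^ 2 * (g⁻¹ * u ^ 2 * g * (u ^ 2 * (m ^ 2 * μ))) = u ^ 2 * (u ^ 2 * u ^ 2) := by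
      have h5 : u ^ 2 * (u ^ 2 * u ^ 2) = z := by
        rw [← pow_add, ← pow_add, pow_mul u 3 2, hu3, ← pow_mul, pow_succ z 3, hz3, one_mul]
      calc _ = u ^ 2 * g⁻¹ * u ^ 2 * g⁻¹ * (g * g * (u * u) * (m * m * μ)) := by
            simp [pow_two, mul_assoc]
        _ = _ := by rw [h5, ← h2, ← h3]; simp only [mul_assoc]
    have h5 := mul_left_cancel h4
    rw [← (((hmu.pow_left 2).mul_left hμu).pow_right 2).eq, ← mul_assoc] at h5
    have h6 := mul_right_cancel h5
    simpa [mul_assoc] using congrArg (g * ·) h6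
  have hug : u * g * (m * μ ^ 2) = g * u := by
    have hκu := ((hmu.pow_left 2).mul_left hμu).pow_right 2
    have h1 : u ^ 2 * (u ^ 2 * g * (m ^ 2 * μ)) * (m ^ 2 * μ) = g * u ^ 2 * u ^ 2 := by
      calc _ = u ^ 2 * g * (u ^ 2 * (m ^ 2 * μ)) := by rw [hu2g]; simp only [mul_assoc]
        _ = u ^ 2 * g * (m ^ 2 * μ) * u ^ 2 := by rw [← hκu.eq]; simp only [mul_assoc]
        _ = _ := by rw [hu2g]
    have h2 : z ^ 2 * (u * g * (m * μ ^ 2)) * m ^ 3 = z ^ 2 * (g * u) := by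
      rw [(hzg.pow_left 2).left_comm, ← hu3, show g * (u ^ 3 * u) = g * u ^ 2 * u ^ 2 by
        simp only [pow_succ, pow_zero, one_mul, mul_assoc], ← h1]
      simp only [pow_succ, pow_zero, one_mul, mul_assoc, hmμ.symm.left_comm, hmμ.symm.eq]
    rw [hm3, mul_one] at h2
    exact mul_left_cancel h2
  have hmμ' : m = μ := by
    have h1 : φ g = g * (v * (m * μ ^ 2)) := by
      have h : u * φ g = u * (g * (v * (m * μ ^ 2))) := by
        rw [hφg, ← hug]
        simp only [mul_assoc, pow_two, hmv.left_comm, hμv.eq, hμv.left_comm]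
      exact mul_left_cancel h
    have h2 := congrArg φ hug
    have hgu' : ∀ X, g * (u * X) = u * (g * (m * (μ ^ 2 * X))) := fun X => by
      rw [← mul_assoc, ← hug]; simp only [mul_assoc]
    rw [map_mul, map_mul, map_mul, map_mul, map_pow, hmφ, hμφ, h1, hu] at h2
    have h3 : u * v * (g * (v * (m * μ ^ 2))) * (m * μ ^ 2) =
        u * g * v ^ 2 * (m ^ 2 * μ) * μ * μ ^ 3 := by
      simp only [mul_assoc, hvg', hμv.left_comm, hmμ.symm.left_comm,
        pow_succ, pow_zero, one_mul]
    have h4 : g * (v * (m * μ ^ 2)) * (u * v) = u * g * v ^ 2 * μ * μ ^ 3 * m ^ 3 := by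
      simp only [mul_assoc, hvu', hgu', hmv.left_comm, hμv.left_comm, hmu.left_comm, hμu.left_comm,
        hmμ.symm.left_comm, hmμ.symm.eq, hμv.eq, pow_succ, pow_zero, one_mul]
    rw [h3, h4, hμ3, hm3, mul_one, mul_one, mul_one] at h2
    have h5 := mul_eq_left.mp (mul_right_cancel h2)
    rw [← hm2] at h5
    exact inv_mul_eq_one.mp h5
  subst hmμ'
  refine ⟨g, by rw [hg, hψ], ?_, hvg, hzg, hg3⟩
  rw [← pow_succ', hm3, mul_one] at hug
  exact hug

theorem top_commute (h3 : ∀ g, φ (φ (φ g)) = z⁻¹ * g * z) (hz : φ z = z) (hv : φ v = v * z)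
    (hu : φ u = u * v) (hw : φ w = w * u) (hq : φ q = q * w) (hu3 : u ^ 3 = z ^ 2)
    (hw3 : w ^ 3 = v ^ 2 * z) :
    z ^ 3 = 1 ∧ v ^ 3 = 1 ∧ Commute z v ∧ Commute z u ∧ Commute v u := by
  obtain ⟨hz3, hzv, hzu, hv3⟩ := top_pow_three_and_commute h3 hz hv hu hu3
  obtain ⟨m, hvu, hmv, hmu, hm3, hmz, hmφ⟩ := top_exists_mul_eq hz hv hu hu3 hz3 hzv hzu hv3
  obtain ⟨g, huw, hug, hvg, hzg, hg3⟩ :=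
    top_exists_conj hz hv hu hw hu3 hw3 hz3 hzv hzu hv3 hvu hmv hmu hm3 hmz hmφ
  refine ⟨hz3, hv3, hzv, hzu, ?_⟩
  obtain ⟨n, rfl⟩ : ∃ n, g = u * n := ⟨u⁻¹ * g, by group⟩
  have hun : Commute u n := by
    have := (Commute.refl u).inv_right.mul_right hug
    rwa [inv_mul_cancel_left] at this
  have hzn : Commute z n := by
    have := hzu.inv_right.mul_right hzg
    rwa [inv_mul_cancel_left] at this
  have hn3 : n ^ 3 = m := by
    rw [hun.mul_pow, hu3] at hg3
    exact mul_left_cancel hg3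
  have hmn : Commute m n := by rw [← hn3]; exact (Commute.refl n).pow_left 3
  have hvn : Commute v n := by
    have h : u * v * m * n = u * n * v * m := by rw [← hvu, mul_assoc, hvg]
    rw [mul_assoc, hmn.eq, ← mul_assoc] at h
    have := mul_right_cancel h
    rw [mul_assoc, mul_assoc] at this
    exact mul_left_cancel this
  have hqn : q * n = z⁻¹ * q * z := by
    rw [← h3 q, hq, map_mul, hq, hw, map_mul, map_mul, map_mul, hq, hw, hu]
    have huw' : ∀ X, u * (w * X) = w * (u * (n * X)) := fun X => by
      rw [← mul_assoc, huw]; simp only [mul_assoc]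
    have h : q * w * (w * u) * (w * u * (u * v)) = q * w ^ 3 * (u ^ 3 * n * v) := by
      simp only [pow_succ, pow_zero, one_mul, mul_assoc, huw', hun.symm.left_comm]
    rw [h, hw3, hu3, mul_assoc (z ^ 2), ← hvn.eq]
    have h' : v ^ 2 * z * (z ^ 2 * (v * n)) = v ^ 3 * z ^ 3 * n := by
      simp only [pow_succ, pow_zero, one_mul, mul_assoc, hzv.left_comm]
    rw [mul_assoc q, h', hv3, hz3, one_mul, one_mul]
  have hsemi : SemiconjBy q (z * n⁻¹) z := by
    rw [SemiconjBy, ← mul_assoc, mul_inv_eq_iff_eq_mul, mul_assoc z, hqn]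
    group
  have hzn3 := hsemi.pow_right 3
  rw [hz3, hzn.inv_right.mul_pow, hz3, one_mul, inv_pow, hn3, SemiconjBy, one_mul,
    mul_eq_left, inv_eq_one] at hzn3
  rw [hzn3, mul_one] at hvu
  exact hvu

end TopCommute

section OrderThree

variable {G : Type*} [Group G] {φ : G →* G} {s : ℕ → G} {c : ℕ}

/-- If `φ³ = 1` and `a · φ a · φ² a = 1`, and `a²` commutes with `φ a`, then commutators in the
`φ`-orbit of `a` are central of order at most two. -/
theorem exists_sign_of_orbit {a b d : G} (ha : φ a = b) (hb : φ b = d) (hd : φ d = a)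
    (habd : a * b * d = 1) (hab : Commute (a ^ 2) b) :
    ∃ κ, κ ^ 2 = 1 ∧ φ κ = κ ∧ Commute κ a ∧ a * b = b * a * κ ∧
      ∃ e : ℤ, a * d = d * a * κ ^ e := by
  have hd' : d = (a * b)⁻¹ := eq_inv_of_mul_eq_one_right habd
  have h1 : Commute (b ^ 2) a := by
    have h := hab.map φ
    rw [map_pow, ha, hb, hd'] at h
    have := h.inv_right.mul_right ((Commute.refl b).pow_left 2).inv_right
    rwa [inv_inv, mul_inv_cancel_right] at this
  have h2 : Commute ((a * b) ^ 2) a := by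
    have h := (hab.map φ).map φ
    rw [map_pow, map_pow, ha, hb, hd, hd', inv_pow] at h
    exact inv_inv ((a * b) ^ 2) ▸ h.inv_left
  have h3 : Commute ((a * b) ^ 2) b := by
    have := h2.inv_right.mul_right ((Commute.refl (a * b)).pow_left 2)
    rwa [inv_mul_cancel_left] at this
  obtain ⟨κ, hκ⟩ : ∃ κ, κ = (b * a)⁻¹ * (a * b) := ⟨_, rfl⟩
  have hab' : a * b = b * a * κ := by simp [hκ, mul_assoc]
  have hκ' : κ = (a ^ 2)⁻¹ * (b ^ 2)⁻¹ * (a * b) ^ 2 := by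
    have : (b ^ 2)⁻¹ * (a * b) ^ 2 = a * b⁻¹ * a * b := by
      rw [pow_two (a * b), mul_assoc a b, ← mul_assoc, h1.inv_left.eq]
      simp [pow_two, mul_assoc]
    rw [hκ, mul_assoc, this]
    simp [pow_two, mul_assoc]
  have hκa : Commute κ a := by
    rw [hκ']
    exact ((((Commute.refl a).pow_left 2).inv_left).mul_left h1.inv_left).mul_left h2
  have hκb : Commute κ b := by
    rw [hκ']
    exact (hab.inv_left.mul_left ((Commute.refl b).pow_left 2).inv_left).mul_left h3
  refine ⟨κ, ?_, ?_, hκa, hab', -1, ?_⟩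
  · have : b * (a * (a * (κ * κ))) = b * (a * a) := by
      rw [← pow_two a, ← hab.eq, pow_two, mul_assoc a a b, hab', mul_assoc b a κ, ← hκa.eq]
      rw [← mul_assoc a b, hab']
      simp only [mul_assoc]
      rw [hκa.eq, hκa.left_comm]
    simpa [pow_two] using this
  · have e1 : φ κ = a * κ * a⁻¹ := by
      rw [hκ, map_mul, map_inv, map_mul, map_mul, ha, hb, hd']
      simp [mul_assoc]
    rw [e1, ← hκa.eq, mul_inv_cancel_right]
  · rw [hd']
    have : a * b * a⁻¹ = b * κ := by
      rw [hab', mul_assoc b, ← hκa.eq, ← mul_assoc, mul_inv_cancel_right]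
    have h := congrArg (fun g => g⁻¹) this
    simp only [mul_inv_rev, inv_inv] at h
    rw [zpow_neg_one, mul_inv_rev, ← mul_assoc, inv_mul_cancel_right]
    simpa [mul_assoc, hκb.inv_inv.eq] using h

/-- The conclusion of the order three case: the tail is abelian and its top is `φ`-fixed. -/
theorem commute_of_order_three {y : G} (hc : 5 ≤ c) (h3 : ∀ g, φ (φ (φ g)) = g)
    (hy : φ y = y * s 2) (shift : ∀ j, 2 ≤ j → j < c → φ (s j) = s j * s (j + 1))
    (cube : ∀ j, 2 ≤ j → j + 3 ≤ c → s j ^ 3 = s (j + 2) ^ 2 * s (j + 3))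
    (top : s (c - 2) ^ 3 = s c ^ 2) :
    φ (s c) = s c ∧ s (c - 1) ^ 3 = 1 ∧ s c ^ 3 = 1 ∧
      ∀ i k, 2 ≤ i → i ≤ c → 2 ≤ k → k ≤ c → Commute (s i) (s k) := by
  obtain ⟨a, ha⟩ : ∃ a, a = s 2 := ⟨_, rfl⟩
  obtain ⟨b, hb⟩ : ∃ b, φ a = b := ⟨_, rfl⟩
  obtain ⟨d, hd⟩ : ∃ d, φ b = d := ⟨_, rfl⟩
  have hda : φ d = a := by rw [← hd, ← hb, h3]
  have step : ∀ j, 2 ≤ j → j < c → s (j + 1) = (s j)⁻¹ * φ (s j) := fun j h h' => by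
    rw [shift j h h', inv_mul_cancel_left]
  have habd : a * b * d = 1 := by
    have := h3 y
    rw [hy, map_mul, map_mul, hy, map_mul, hy, ← ha, hb, hd] at this
    simpa [mul_assoc] using this
  have hd' : d = (a * b)⁻¹ := eq_inv_of_mul_eq_one_right habd
  have hab : Commute (a ^ 2) b := by
    have e3 : s 3 = a⁻¹ * b := by rw [step 2 le_rfl (by omega), ← ha, hb]
    have e4 : s 4 = b⁻¹ * a * b⁻¹ * d := by
      rw [step 3 (by omega) (by omega), e3, map_mul, map_inv, hb, hd]
      simp [mul_assoc]
    have e5 := shift 4 (by omega) (by omega)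
    have h := cube 2 le_rfl (by omega)
    rw [← ha, pow_two, mul_assoc, ← e5, e4] at h
    simp only [map_mul, map_inv, hb, hd, hda] at h
    have h' : a * a * a = b⁻¹ * (a * a) * b * a := by
      rw [pow_succ, pow_two] at h
      rw [h, hd']
      simp [mul_assoc]
    have h'' := mul_right_cancel h'
    rw [pow_two]
    change a * a * b = b * (a * a)
    nth_rewrite 2 [h'']
    simp [mul_assoc]
  obtain ⟨κ, hκ2, hφκ, hκa, e1, e, e2⟩ := exists_sign_of_orbit hb hd hda habd hab
  have hκb : Commute κ b := by simpa [hφκ, hb] using hκa.map φ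
  let K : G → Prop := fun g => Commute κ g ∧ (∃ e : ℤ, g * a = a * g * κ ^ e) ∧
    (∃ e : ℤ, g * b = b * g * κ ^ e) ∧ (∃ e : ℤ, g * d = d * g * κ ^ e)
  have Kφ : ∀ g, K g → K (φ g) := by
    rintro g ⟨hg, ⟨p, hp⟩, ⟨q, hq⟩, ⟨r, hr⟩⟩
    refine ⟨by simpa [hφκ] using hg.map φ, ⟨r, ?_⟩, ⟨p, ?_⟩, ⟨q, ?_⟩⟩
    · simpa [hφκ, hda] using congrArg φ hr
    · simpa [hφκ, hb] using congrArg φ hp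
    · simpa [hφκ, hd] using congrArg φ hq
  have mul_aux : ∀ g g' h : G, Commute κ g' → (∃ e : ℤ, g * h = h * g * κ ^ e) →
      (∃ e : ℤ, g' * h = h * g' * κ ^ e) → ∃ e : ℤ, g * g' * h = h * (g * g') * κ ^ e := by
    rintro g g' h hg' ⟨p, hp⟩ ⟨q, hq⟩
    refine ⟨p + q, ?_⟩
    rw [mul_assoc, hq, mul_assoc h, ← mul_assoc g, hp, zpow_add]
    simp only [mul_assoc]
    rw [(hg'.zpow_left p).left_comm]
  have inv_aux : ∀ g h : G, Commute κ g → (∃ e : ℤ, g * h = h * g * κ ^ e) →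
      ∃ e : ℤ, g⁻¹ * h = h * g⁻¹ * κ ^ e := by
    rintro g h hg ⟨p, hp⟩
    refine ⟨-p, ?_⟩
    have : g * (h * g⁻¹ * κ ^ (-p)) = h := by
      rw [← mul_assoc, ← mul_assoc, hp, mul_assoc h, ← (hg.zpow_left p).eq]
      simp [mul_assoc]
    nth_rewrite 1 [← this]
    rw [inv_mul_cancel_left]
  have Kmul : ∀ g g', K g → K g' → K (g * g') := by
    rintro g g' ⟨hg, hp, hq, hr⟩ ⟨hg', hp', hq', hr'⟩
    exact ⟨hg.mul_right hg', mul_aux _ _ _ hg' hp hp', mul_aux _ _ _ hg' hq hq',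
      mul_aux _ _ _ hg' hr hr'⟩
  have Kinv : ∀ g, K g → K g⁻¹ := by
    rintro g ⟨hg, hp, hq, hr⟩
    exact ⟨hg.inv_right, inv_aux _ _ hg hp, inv_aux _ _ hg hq, inv_aux _ _ hg hr⟩
  have Ks : ∀ j, 2 ≤ j → j ≤ c → K (s j) := by
    intro j hj
    induction j, hj using Nat.le_induction with
    | base =>
      intro _
      rw [← ha]
      exact ⟨hκa, ⟨0, by simp⟩, ⟨1, by simpa using e1⟩, ⟨e, e2⟩⟩
    | succ j hj ih =>
      intro hjc
      rw [step j hj (by omega)]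
      exact Kmul _ _ (Kinv _ (ih (by omega))) (Kφ _ (ih (by omega)))
  let Z : Subgroup G := Subgroup.centralizer {a, b, d}
  have memZ : ∀ g, g ∈ Z ↔ Commute g a ∧ Commute g b ∧ Commute g d := by
    intro g
    simp only [Z, Subgroup.mem_centralizer_iff, Set.mem_insert_iff, Set.mem_singleton_iff,
      forall_eq_or_imp, forall_eq]
    exact ⟨fun h => ⟨h.1.symm, h.2.1.symm, h.2.2.symm⟩,
      fun h => ⟨h.1.eq.symm, h.2.1.eq.symm, h.2.2.eq.symm⟩⟩
  have Zφ : ∀ g ∈ Z, φ g ∈ Z := by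
    intro g hg
    rw [memZ] at hg ⊢
    refine ⟨?_, ?_, ?_⟩
    · simpa [hda] using hg.2.2.map φ
    · simpa [hb] using hg.1.map φ
    · simpa [hd] using hg.2.1.map φ
  have sq_aux : ∀ g h : G, Commute κ g → (∃ e : ℤ, g * h = h * g * κ ^ e) →
      Commute (g ^ 2) h := by
    rintro g h hg ⟨p, hp⟩
    change g ^ 2 * h = h * g ^ 2
    have hk : κ ^ p * κ ^ p = 1 := by
      rw [← zpow_add, ← two_mul, zpow_mul]
      have : κ ^ (2 : ℤ) = 1 := by exact_mod_cast hκ2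
      rw [this, one_zpow]
    rw [pow_two, mul_assoc, hp, ← mul_assoc, ← mul_assoc, hp, mul_assoc (h * g),
      (hg.zpow_left p).eq, ← mul_assoc, mul_assoc _ (κ ^ p), hk]
    simp [mul_assoc]
  have Zsq : ∀ g, K g → g ^ 2 ∈ Z := fun g ⟨hg, hp, hq, hr⟩ =>
    (memZ _).2 ⟨sq_aux _ _ hg hp, sq_aux _ _ hg hq, sq_aux _ _ hg hr⟩
  have Zroot : ∀ g, K g → g ^ 3 ∈ Z → g ∈ Z := fun g hg h => by
    have := Z.mul_mem (Z.inv_mem (Zsq g hg)) h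
    rwa [pow_succ g 2, inv_mul_cancel_left] at this
  have Zu : s (c - 2) ∈ Z := by
    refine Zroot _ (Ks _ (by omega) (by omega)) ?_
    rw [top]
    exact Zsq _ (Ks _ (by omega) le_rfl)
  have Zsucc : ∀ j, 2 ≤ j → j < c → s j ∈ Z → s (j + 1) ∈ Z := fun j hj hjc h => by
    rw [step j hj hjc]
    exact Z.mul_mem (Z.inv_mem h) (Zφ _ h)
  have Zv : s (c - 1) ∈ Z := by
    have := Zsucc (c - 2) (by omega) (by omega) Zu
    rwa [show c - 2 + 1 = c - 1 by omega] at this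
  have Zz : s c ∈ Z := by
    have := Zsucc (c - 1) (by omega) (by omega) Zv
    rwa [show c - 1 + 1 = c by omega] at this
  have Zs : ∀ n j, 2 ≤ j → j ≤ c → c - j ≤ n → s j ∈ Z := by
    intro n
    induction n with
    | zero =>
      intro j hj hjc hn
      rwa [show j = c by omega]
    | succ n ih =>
      intro j hj hjc hn
      rcases Nat.lt_or_ge c (j + 3) with h | h
      · obtain rfl | rfl | rfl : j = c ∨ j = c - 1 ∨ j = c - 2 := by omega
        · exact Zz
        · exact Zv
        · exact Zu
      · refine Zroot _ (Ks _ hj hjc) ?_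
        rw [cube j hj h]
        exact Z.mul_mem (Z.pow_mem (ih _ (by omega) (by omega) (by omega)) 2)
          (ih _ (by omega) (by omega) (by omega))
  have comm : ∀ j, 2 ≤ j → j ≤ c → ∀ g ∈ Z, Commute g (s j) := by
    intro j hj
    induction j, hj using Nat.le_induction with
    | base =>
      intro _ g hg
      rw [← ha]
      exact ((memZ g).1 hg).1
    | succ j hj ih =>
      intro hjc g hg
      rw [step j hj (by omega)]
      have h := (ih (by omega) _ (Zφ _ (Zφ _ hg))).map φ
      rw [h3] at h
      exact (ih (by omega) g hg).inv_right.mul_right h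
  have hcomm : ∀ i k, 2 ≤ i → i ≤ c → 2 ≤ k → k ≤ c → Commute (s i) (s k) :=
    fun i k hi hic hk hkc => comm k hk hkc _ (Zs _ i hi hic le_rfl)
  obtain ⟨n, rfl⟩ : ∃ n, c = n + 5 := ⟨c - 5, by omega⟩
  simp only [show n + 5 - 2 = n + 3 by omega, show n + 5 - 1 = n + 4 by omega] at *
  have hu := shift (n + 3) (by omega) (by omega)
  have hv := shift (n + 4) (by omega) (by omega)
  have hw := shift (n + 2) (by omega) (by omega)
  have hw3 := cube (n + 2) (by omega) (by omega)
  have c1 := hcomm (n + 2) (n + 3) (by omega) (by omega) (by omega) (by omega)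
  have c2 := hcomm (n + 3) (n + 4) (by omega) (by omega) (by omega) (by omega)
  have c3 := hcomm (n + 4) (n + 5) (by omega) (by omega) (by omega) (by omega)
  have hz : φ (s (n + 5)) = s (n + 5) := by
    have h := congrArg φ hw3
    rw [map_pow, map_mul, map_pow, hw, hv, c1.mul_pow, c3.mul_pow, hw3, top, mul_assoc,
      mul_assoc] at h
    have h := mul_left_cancel h
    rw [← pow_succ', pow_succ] at h
    exact (mul_left_cancel h).symm
  have hv3 : s (n + 4) ^ 3 = 1 := by
    have h := congrArg φ top
    rw [map_pow, map_pow, hu, hz, c2.mul_pow, top] at h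
    exact mul_eq_left.1 h
  refine ⟨hz, hv3, ?_, hcomm⟩
  have h := congrArg φ hv3
  rwa [map_pow, map_one, hv, c3.mul_pow, hv3, one_mul] at h

end OrderThree

/-- Elements `x, y, t, s_2, …, s_c` of a group satisfying the relations of
`G_Q(c, x³ s_c⁻ˡ, y³ s₃⁻² s₄⁻¹ s_c⁻ᵏ)`, with `s_j = 1` for `j > c`. -/
structure QRelations {G : Type*} [Group G] (c l k : ℕ) (x y t : G) (s : ℕ → G) : Prop where
  two : s 2 = fcomm y x
  three : t = fcomm (s 2) y
  t_cube : t ^ 3 = 1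
  top : s (c - 2) ^ 3 = s c ^ 2
  x_cube : x ^ 3 = s c ^ l
  y_cube : y ^ 3 = s c ^ k * s 4 * s 3 ^ 2
  succ : ∀ j, 2 ≤ j → j < c → s (j + 1) = fcomm (s j) x
  cube : ∀ j, 2 ≤ j → j + 3 ≤ c → s j ^ 3 = s (j + 2) ^ 2 * s (j + 3)
  high : ∀ j, c < j → s j = 1

/-- Conjugation `g ↦ x⁻¹ g x` as a homomorphism. -/
def conjHom {G : Type*} [Group G] (x : G) : G →* G := (MulAut.conj x⁻¹).toMonoidHom

theorem conjHom_apply {G : Type*} [Group G] (x g : G) : conjHom x g = x⁻¹ * g * x := by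
  simp [conjHom]

namespace QRelations

variable {G : Type*} [Group G] {c l k : ℕ} {x y t : G} {s : ℕ → G}

theorem conjHom_y (h : QRelations c l k x y t s) : conjHom x y = y * s 2 := by
  simp [conjHom_apply, h.two, fcomm, mul_assoc]

theorem conjHom_s (h : QRelations c l k x y t s) (j : ℕ) (hj : 2 ≤ j) (hjc : j < c) :
    conjHom x (s j) = s j * s (j + 1) := by
  simp [conjHom_apply, h.succ j hj hjc, fcomm, mul_assoc]

theorem tail_of_fixed (h : QRelations c l k x y t s) (hz : conjHom x (s c) = s c)
    (hv : s (c - 1) ^ 3 = 1) (hz3 : s c ^ 3 = 1) : Tail (conjHom x) s c where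
  shift j hj := by
    rcases lt_trichotomy j c with hjc | rfl | hjc
    · exact h.conjHom_s j hj hjc
    · rw [hz, h.high (j + 1) (by omega), mul_one]
    · rw [h.high j hjc, h.high (j + 1) (by omega), map_one, mul_one]
  cube j hj := by
    rcases Nat.lt_or_ge c (j + 3) with hc | hc
    · rw [h.high (j + 3) hc, mul_one]
      rcases Nat.lt_or_ge c (j + 2) with hc' | hc'
      · rw [h.high (j + 2) hc', one_pow]
        obtain hj' | rfl | rfl : c < j ∨ j = c ∨ j = c - 1 := by omega
        · rw [h.high j hj', one_pow]
        · exact hz3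
        · exact hv
      · obtain rfl : c = j + 2 := by omega
        exact h.top
    · exact h.cube j hj hc
  top := h.high

theorem tail_and_commute (h : QRelations c l k x y t s) (hc : 6 ≤ c) (hl : l = 0 ∨ l = 1) :
    Tail (conjHom x) s c ∧ ∀ i j, 2 ≤ i → 2 ≤ j → Commute (s i) (s j) := by
  have extend : ∀ m, (∀ i j, m ≤ i → i ≤ c → m ≤ j → j ≤ c → Commute (s i) (s j)) →
      ∀ i j, m ≤ i → m ≤ j → Commute (s i) (s j) := by
    intro m hm i j hi hj
    rcases Nat.lt_or_ge c i with hi' | hi'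
    · rw [h.high i hi']
      exact Commute.one_left _
    rcases Nat.lt_or_ge c j with hj' | hj'
    · rw [h.high j hj']
      exact Commute.one_right _
    exact hm i j hi hi' hj hj'
  have h3 : ∀ g, conjHom x (conjHom x (conjHom x g)) = (x ^ 3)⁻¹ * g * x ^ 3 := fun g => by
    simp [conjHom_apply, pow_succ, mul_assoc]
  rw [h.x_cube] at h3
  rcases hl with rfl | rfl
  · obtain ⟨hz, hv3, hz3, hcomm⟩ := commute_of_order_three (φ := conjHom x) (by omega)
      (by simpa using h3) h.conjHom_y h.conjHom_s h.cube h.top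
    exact ⟨h.tail_of_fixed hz hv3 hz3, extend 2 hcomm⟩
  · rw [pow_one] at h3
    have hz : conjHom x (s c) = s c := by
      have := h.x_cube
      rw [pow_one] at this
      rw [← this, conjHom_apply]
      simp [pow_succ, mul_assoc]
    obtain ⟨n, rfl⟩ : ∃ n, c = n + 6 := ⟨c - 6, by omega⟩
    obtain ⟨hz3, hv3, czv, czu, cvu⟩ := top_commute h3 hz
      (h.conjHom_s (n + 5) (by omega) (by omega)) (h.conjHom_s (n + 4) (by omega) (by omega))
      (h.conjHom_s (n + 3) (by omega) (by omega)) (h.conjHom_s (n + 2) (by omega) (by omega))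
      h.top (h.cube (n + 3) (by omega) (by omega))
    have T := h.tail_of_fixed hz hv3 hz3
    refine ⟨T, T.commute_of_commute_top (by omega) (extend _ fun i j hi hic hj hjc => ?_) h3
      h.conjHom_y h.y_cube⟩
    obtain rfl | rfl | rfl : i = n + 4 ∨ i = n + 5 ∨ i = n + 6 := by omega
    all_goals obtain rfl | rfl | rfl : j = n + 4 ∨ j = n + 5 ∨ j = n + 6 := by omega
    all_goals first | exact Commute.refl _ | assumption | (apply Commute.symm; assumption)

end QRelations

/-- The tail attached to the generators `x⁻¹, y`, where `φ` is conjugation by `x`. -/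
def flipTail {G : Type*} [Group G] (φ : G →* G) (s : ℕ → G) (j : ℕ) : G :=
  φ^[2 * j + 1] (s j ^ ((-1 : ℤ) ^ (j + 1)))

theorem QRelations.flip {G : Type*} [Group G] {c l k k' : ℕ} {x y t : G} {s : ℕ → G}
    (h : QRelations c l k x y t s) (hc : 6 ≤ c) (heven : Even c) (hl : l = 0 ∨ l = 1)
    (hk : 3 ∣ k + k') : QRelations c l k' x⁻¹ y t⁻¹ (flipTail (conjHom x) s) := by
  obtain ⟨T, hs⟩ := h.tail_and_commute hc hl
  have hy3 : y ^ 3 = s 3 ^ 2 * s 4 * s c ^ k := by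
    rw [h.y_cube, mul_assoc, ((hs 4 3 (by omega) (by omega)).pow_right 2).eq,
      (((hs c 3 (by omega) (by omega)).pow_pow k 2).mul_right
        ((hs c 4 (by omega) (by omega)).pow_left k)).eq]
  have hys := T.commute_of_pow_three (by omega) hs h.conjHom_y hy3
  obtain ⟨t₀, ht₀, ht₂, -, -, -, -⟩ := T.exists_mul_eq_of_pow_three (by omega) hs h.conjHom_y hy3
  obtain rfl : t = t₀ := by
    rw [h.three, fcomm, mul_assoc, ht₀]
    simp [mul_assoc]
  have hz3 : s c ^ 3 = 1 := by
    rw [T.cube c (by omega), T.top _ (by omega), T.top _ (by omega), one_pow, mul_one]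
  have hzk : s c ^ (k + k') = 1 := by
    obtain ⟨m, hm⟩ := hk
    rw [hm, pow_mul, hz3, one_pow]
  have hconj : ∀ g, x * conjHom x g * x⁻¹ = g := fun g => by simp [conjHom_apply, mul_assoc]
  obtain ⟨φ, hφ⟩ : ∃ φ, φ = conjHom x := ⟨_, rfl⟩
  rw [← hφ] at T hconj ⊢
  have hφ3 : ∀ j, 2 ≤ j → φ (φ (φ (s j))) = s j := fun j hj => by
    have : φ (φ (φ (s j))) = (x ^ 3)⁻¹ * (s j * x ^ 3) := by
      simp [hφ, conjHom_apply, pow_succ, mul_assoc]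
    rw [this, h.x_cube, ((hs j c hj (by omega)).pow_right l).eq, inv_mul_cancel_left]
  have hflip : ∀ j m, flipTail φ s (j + m) =
      φ^[2 * j + 1] (φ^[2 * m] (s (j + m) ^ ((-1 : ℤ) ^ (j + m + 1)))) := fun j m => by
    rw [← Function.iterate_add_apply, flipTail]
    rw [show 2 * (j + m) + 1 = 2 * j + 1 + 2 * m by ring]
  have hpow : ∀ (a : G) (ε : ℤ) (n : ℕ), (a ^ ε) ^ n = (a ^ n) ^ ε := fun a ε n => by
    rw [← zpow_natCast, ← zpow_natCast, ← zpow_mul, ← zpow_mul, mul_comm]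
  have hφc : φ (s c) = s c := by rw [T.shift c (by omega), T.top (c + 1) (by omega), mul_one]
  have hflipc : flipTail φ s c = (s c)⁻¹ := by
    rw [flipTail, heven.add_one.neg_one_pow, zpow_neg_one, iterate_map_inv,
      Function.iterate_fixed hφc]
  have hflip2 : flipTail φ s 2 = (φ (φ (s 2)))⁻¹ := by
    change φ (φ (φ (φ (φ (s 2 ^ (-1 : ℤ) ^ 3))))) = _
    norm_num
    rw [hφ3 2 le_rfl]
  have hflip3 : flipTail φ s 3 = s 3 * s 4 := by
    change φ (φ (φ (φ (φ (φ (φ (s 3 ^ (-1 : ℤ) ^ 4))))))) = _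
    norm_num
    rw [hφ3 3 (by omega), hφ3 3 (by omega), T.shift 3 (by omega)]
  have hflip4 : flipTail φ s 4 = (s 4)⁻¹ := by
    change φ (φ (φ (φ (φ (φ (φ (φ (φ (s 4 ^ (-1 : ℤ) ^ 5))))))))) = _
    norm_num
    rw [hφ3 4 (by omega), hφ3 4 (by omega), hφ3 4 (by omega)]
  have hhigh : ∀ j, c < j → flipTail φ s j = 1 := fun j hj => by
    rw [flipTail, h.high j hj, one_zpow, iterate_map_one]
  have hφφ : ∀ j, 2 ≤ j → φ (φ (s j)) = s j * s (j + 1) ^ 2 * s (j + 2) := fun j hj => by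
    rw [T.shift j hj, map_mul, T.shift j hj, T.shift (j + 1) (by omega)]
    simp [pow_two, mul_assoc]
  have hcube : ∀ j, 2 ≤ j →
      flipTail φ s j ^ 3 = flipTail φ s (j + 2) ^ 2 * flipTail φ s (j + 3) := by
    intro j hj
    rw [hflip j 2, hflip j 3, flipTail, ← iterate_map_pow, ← iterate_map_pow, ← iterate_map_mul]
    congr 1
    rw [show (-1 : ℤ) ^ (j + 2 + 1) = (-1) ^ (j + 1) by ring,
      show (-1 : ℤ) ^ (j + 3 + 1) = -(-1) ^ (j + 1) by ring]
    generalize (-1 : ℤ) ^ (j + 1) = ε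
    rw [iterate_map_zpow, iterate_map_zpow]
    change _ = ((φ (φ (φ (φ (s (j + 2)))))) ^ ε) ^ 2 *
      φ (φ (φ (φ (φ (φ (s (j + 3))))))) ^ (-ε)
    rw [hφ3 _ (by omega), hφ3 _ (by omega), hφ3 _ (by omega), T.shift _ (by omega), zpow_neg,
      ← inv_zpow, hpow, hpow, ← Commute.mul_zpow, T.cube j hj]
    · congr 1
      rw [(hs (j + 2) (j + 3) (by omega) (by omega)).mul_pow, pow_two (s (j + 3))]
      simp [mul_assoc]
    · exact (((hs (j + 2) (j + 3) (by omega) (by omega)).mul_left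
        (Commute.refl _)).pow_left 2).inv_right
  refine ⟨?_, ?_, ?_, ?_, ?_, ?_, ?_, fun j hj _ => hcube j hj, hhigh⟩
  · rw [hflip2, ← hconj (φ (φ (s 2))), hφ3 2 le_rfl, h.two]
    simp [fcomm, mul_assoc]
  · rw [hflip2, hφφ 2 le_rfl, mul_assoc]
    have hyw : Commute (s 3 ^ 2 * s 4) y⁻¹ :=
      (((hys 3 le_rfl).symm.pow_left 2).mul_left (hys 4 (by omega)).symm).inv_right
    have hst : y⁻¹ * (s 2)⁻¹ * y = t⁻¹ * (s 2)⁻¹ := by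
      have : y⁻¹ * s 2 * y = s 2 * t := by rw [mul_assoc, ht₀, mul_assoc, inv_mul_cancel_left]
      rw [← mul_inv_rev (s 2) t, ← this]
      simp [mul_assoc]
    rw [fcomm, inv_inv, mul_inv_rev, mul_assoc (s 2), hyw.eq, ← mul_assoc (s 2),
      mul_assoc (s 2 * y⁻¹), mul_inv_cancel_left, mul_assoc (s 2), mul_assoc (s 2), hst,
      ← mul_assoc, ← ht₂.inv_left.eq, mul_inv_cancel_right]
  · rw [inv_pow, h.t_cube, inv_one]
  · have := hcube (c - 2) (by omega)
    rwa [show c - 2 + 2 = c by omega, hhigh (c - 2 + 3) (by omega), mul_one] at this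
  · rw [inv_pow, h.x_cube, hflipc, inv_pow]
  · have h34 := hs 3 4 (by omega) (by omega)
    rw [hflipc, hflip3, hflip4, h.y_cube, inv_pow,
      inv_eq_of_mul_eq_one_left ((pow_add (s c) k k').symm.trans hzk), mul_assoc, mul_assoc,
      h34.mul_pow, ((h34.pow_pow 2 2)).eq, pow_two (s 4)]
    simp [mul_assoc]
  · intro j hj _
    have e1 : φ (s (j + 1)) = (φ (s j))⁻¹ * φ (φ (s j)) := by
      rw [← map_inv, ← map_mul, T.shift j hj, inv_mul_cancel_left]
    have hc' : Commute (φ (φ (s j))) (s j) := by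
      rw [hφφ j hj]
      exact ((Commute.refl _).mul_left ((hs _ _ (by omega) hj).pow_left 2)).mul_left
        (hs _ _ (by omega) hj)
    have e2 : x * flipTail φ s j * x⁻¹ =
        φ^[2 * j + 1] (φ (φ (s j)) ^ ((-1 : ℤ) ^ (j + 1))) := by
      rw [← hconj (φ^[2 * j + 1] (φ (φ (s j)) ^ ((-1 : ℤ) ^ (j + 1)))),
        ← Function.iterate_succ_apply' φ, Function.iterate_succ_apply, map_zpow, hφ3 j hj]
      rfl
    rw [fcomm, inv_inv, mul_assoc, mul_assoc, ← mul_assoc x, e2, hflip j 1, flipTail,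
      ← iterate_map_inv, ← iterate_map_mul]
    congr 1
    rw [show (-1 : ℤ) ^ (j + 1 + 1) = -(-1) ^ (j + 1) by ring]
    generalize (-1 : ℤ) ^ (j + 1) = ε
    change φ (φ (s (j + 1) ^ (-ε))) = _
    rw [map_zpow, map_zpow, e1, map_mul, map_inv, hφ3 j hj, zpow_neg, ← inv_zpow, ← inv_zpow,
      mul_inv_rev, inv_inv, hc'.inv_right.symm.mul_zpow]

/-- The word `Rx` expresses the relation `x³ = s_cˡ`. -/
def IsXRelator (c l : ℕ) (Rx : FreeGroup ℕ) : Prop :=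
  ∀ (H : Type) [Group H] (f : FreeGroup ℕ →* H), f Rx = 1 ↔ f xw ^ 3 = f (sw c) ^ l

/-- The word `Ry` expresses the relation `y³ = s_cᵏ s₄ s₃²`. -/
def IsYRelator (c k : ℕ) (Ry : FreeGroup ℕ) : Prop :=
  ∀ (H : Type) [Group H] (f : FreeGroup ℕ →* H),
    f Ry = 1 ↔ f yw ^ 3 = f (sw c) ^ k * f (sw 4) * f (sw 3) ^ 2

theorem isXRelator_zero (c : ℕ) : IsXRelator c 0 (xw ^ 3) := fun H _ f => by simp

theorem isXRelator_one (c : ℕ) : IsXRelator c 1 (xw ^ 3 * (sw c)⁻¹) := fun H _ f => by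
  simp [mul_inv_eq_one]

theorem isYRelator_zero (c : ℕ) : IsYRelator c 0 Ry0 := fun H _ f => by
  simp [Ry0, mul_inv_eq_iff_eq_mul]

theorem isYRelator_one (c : ℕ) : IsYRelator c 1 (Ry1 c) := fun H _ f => by
  simp [Ry1, mul_inv_eq_iff_eq_mul]

theorem isYRelator_two (c : ℕ) : IsYRelator c 2 (Ry2 c) := fun H _ f => by
  simp [Ry2, mul_inv_eq_iff_eq_mul]

section Presentation

variable {c l k : ℕ} {Rx Ry : FreeGroup ℕ}

theorem qRelations_mk (hx : IsXRelator c l Rx) (hy : IsYRelator c k Ry) :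
    QRelations c l k (PresentedGroup.mk (rels c Rx Ry) xw) (PresentedGroup.mk _ yw)
      (PresentedGroup.mk _ t3w) (fun j => PresentedGroup.mk (rels c Rx Ry) (sw j)) := by
  have key : ∀ r ∈ rels c Rx Ry, PresentedGroup.mk (rels c Rx Ry) r = 1 := fun r hr =>
    PresentedGroup.one_of_mem hr
  generalize PresentedGroup.mk (rels c Rx Ry) = f at key
  have keyMul : ∀ a b : FreeGroup ℕ, a * b⁻¹ ∈ rels c Rx Ry → f a = f b := fun a b h => by
    have := key _ h
    rwa [map_mul, map_inv, mul_inv_eq_one] at this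
  have map_fcomm : ∀ a b : FreeGroup ℕ, f (fcomm a b) = fcomm (f a) (f b) := fun a b => by
    simp [fcomm]
  refine ⟨?_, ?_, ?_, ?_, (hx _ f).1 (key _ ?_), (hy _ f).1 (key _ ?_), ?_, ?_, ?_⟩
  · rw [← map_fcomm]
    exact keyMul _ _ (by simp [rels])
  · rw [← map_fcomm]
    exact keyMul _ _ (by simp [rels])
  · rw [← map_pow]
    exact key _ (by simp [rels])
  · rw [← map_pow, ← map_pow]
    exact keyMul _ _ (by simp [rels])
  · simp [rels]
  · simp [rels]
  · intro j hj hjc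
    rw [← map_fcomm]
    exact keyMul _ _ (Or.inl (Or.inl (Or.inr ⟨j + 1, by omega, by omega, rfl⟩)))
  · intro j hj hjc
    rw [← map_pow, ← map_pow, ← map_mul]
    exact keyMul _ _ (Or.inl (Or.inr ⟨j, hj, by omega, rfl⟩))
  · intro j hj
    exact key _ (Or.inr ⟨j + 1, by omega, rfl⟩)

/-- Images of the generators of `G_Q`. -/
def genMap {H : Type} (x y t : H) (s : ℕ → H) : ℕ → H
  | 0 => x
  | 1 => y
  | 2 => t
  | n + 3 => s (n + 2)

theorem QRelations.exists_hom {H : Type} [Group H] {x y t : H} {s : ℕ → H}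
    (h : QRelations c l k x y t s) (hc : 6 ≤ c) (hx : IsXRelator c l Rx)
    (hy : IsYRelator c k Ry) :
    ∃ f : GQ c Rx Ry →* H, f (PresentedGroup.mk _ xw) = x ∧ f (PresentedGroup.mk _ yw) = y := by
  have hxw : FreeGroup.lift (genMap x y t s) xw = x := FreeGroup.lift_apply_of ..
  have hyw : FreeGroup.lift (genMap x y t s) yw = y := FreeGroup.lift_apply_of ..
  have htw : FreeGroup.lift (genMap x y t s) t3w = t := FreeGroup.lift_apply_of ..
  have hsw : ∀ j, 2 ≤ j → FreeGroup.lift (genMap x y t s) (sw j) = s j := fun j hj => by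
    obtain ⟨n, rfl⟩ : ∃ n, j = n + 2 := ⟨j - 2, by omega⟩
    exact FreeGroup.lift_apply_of ..
  have hF : ∀ r ∈ rels c Rx Ry, FreeGroup.lift (genMap x y t s) r = 1 := by
    rintro r (((hr | ⟨j, hj, hjc, rfl⟩) | ⟨j, hj, hjc, rfl⟩) | ⟨n, hn, rfl⟩)
    · simp only [Set.mem_insert_iff, Set.mem_singleton_iff] at hr
      rcases hr with rfl | rfl | rfl | rfl | rfl | rfl
      · simp only [fcomm, map_mul, map_inv, hxw, hyw, hsw 2 le_rfl, mul_inv_eq_one]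
        exact h.two
      · simp only [fcomm, map_mul, map_inv, htw, hyw, hsw 2 le_rfl, mul_inv_eq_one]
        exact h.three
      · rw [map_pow, htw, h.t_cube]
      · rw [map_mul, map_inv, map_pow, map_pow, hsw c (by omega), hsw _ (by omega), h.top,
          mul_inv_cancel]
      · rw [hx, hxw, hsw c (by omega), h.x_cube]
      · rw [hy, hyw, hsw c (by omega), hsw 4 (by omega), hsw 3 (by omega), h.y_cube]
    · obtain ⟨m, rfl⟩ : ∃ m, j = m + 1 := ⟨j - 1, by omega⟩
      rw [Nat.add_sub_cancel]
      simp only [fcomm, map_mul, map_inv, hxw, hsw (m + 1) (by omega), hsw m (by omega),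
        mul_inv_eq_one]
      exact h.succ m (by omega) (by omega)
    · rw [map_mul, map_inv, map_mul, map_pow, map_pow, hsw _ (by omega), hsw _ (by omega),
        hsw _ (by omega), h.cube j hj (by omega), mul_inv_cancel]
    · have := hsw (n - 1) (by omega)
      rw [sw, Nat.sub_add_cancel (by omega)] at this
      rw [this, h.high _ (by omega)]
  exact ⟨PresentedGroup.toGroup (f := genMap x y t s) hF, hxw, hyw⟩

/-- The group is generated by `x` and `y`. -/
theorem closure_eq_top (hx : IsXRelator c l Rx) (hy : IsYRelator c k Ry) :
    Subgroup.closure {PresentedGroup.mk (rels c Rx Ry) xw, PresentedGroup.mk (rels c Rx Ry) yw}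
      = ⊤ := by
  have h := qRelations_mk hx hy
  rw [eq_top_iff, ← PresentedGroup.closure_range_of, Subgroup.closure_le]
  generalize hC : Subgroup.closure {PresentedGroup.mk (rels c Rx Ry) xw,
    PresentedGroup.mk (rels c Rx Ry) yw} = C
  have mx : PresentedGroup.mk (rels c Rx Ry) xw ∈ C := hC ▸ Subgroup.subset_closure (by simp)
  have my : PresentedGroup.mk (rels c Rx Ry) yw ∈ C := hC ▸ Subgroup.subset_closure (by simp)
  have mem_fcomm : ∀ a ∈ C, ∀ b ∈ C, fcomm a b ∈ C := fun a ha b hb =>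
    C.mul_mem (C.mul_mem (C.mul_mem (C.inv_mem ha) (C.inv_mem hb)) ha) hb
  have ms : ∀ j, 2 ≤ j → PresentedGroup.mk (rels c Rx Ry) (sw j) ∈ C := by
    intro j hj
    induction j, hj using Nat.le_induction with
    | base => exact h.two ▸ mem_fcomm _ my _ mx
    | succ j hj ih =>
      rcases Nat.lt_or_ge j c with hjc | hjc
      · exact h.succ j hj hjc ▸ mem_fcomm _ ih _ mx
      · exact h.high (j + 1) (by omega) ▸ C.one_mem
  rintro _ ⟨n, rfl⟩
  match n with
  | 0 => exact mx
  | 1 => exact my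
  | 2 =>
    have : PresentedGroup.mk (rels c Rx Ry) t3w ∈ C := h.three ▸ mem_fcomm _ (ms 2 le_rfl) _ my
    exact this
  | n + 3 => exact ms (n + 2) (by omega)

theorem nonempty_mulEquiv {k' : ℕ} {Ry' : FreeGroup ℕ} (hc : 6 ≤ c) (heven : Even c)
    (hl : l = 0 ∨ l = 1) (hk : 3 ∣ k + k') (hx : IsXRelator c l Rx) (hy : IsYRelator c k Ry)
    (hy' : IsYRelator c k' Ry') : Nonempty (GQ c Rx Ry ≃* GQ c Rx Ry') := by
  obtain ⟨f, fx, fy⟩ := ((qRelations_mk hx hy').flip hc heven hl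
    (by rwa [add_comm])).exists_hom hc hx hy
  obtain ⟨g, gx, gy⟩ := ((qRelations_mk hx hy).flip hc heven hl hk).exists_hom hc hx hy'
  refine ⟨MonoidHom.toMulEquiv f g ?_ ?_⟩
  · refine MonoidHom.eq_of_eqOn_dense (closure_eq_top hx hy) ?_
    rintro _ (rfl | rfl)
    · simp [fx, gx]
    · simp [fy, gy]
  · refine MonoidHom.eq_of_eqOn_dense (closure_eq_top hx hy') ?_
    rintro _ (rfl | rfl)
    · simp [fx, gx]
    · simp [fy, gy]

end Presentation

/-- The wreath product of `ℤ/M` by `ℤ/3`. -/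
@[ext]
structure Wr (M : ℕ) where
  /-- the component in the cyclic group on top -/
  top : ZMod 3
  /-- the component in the base group -/
  fn : ZMod 3 → ZMod M

namespace Wr

variable {M : ℕ}

instance : Mul (Wr M) := ⟨fun g h => ⟨g.top + h.top, fun p => g.fn (p + h.top) + h.fn p⟩⟩

instance : One (Wr M) := ⟨⟨0, 0⟩⟩

instance : Inv (Wr M) := ⟨fun g => ⟨-g.top, fun p => -g.fn (p - g.top)⟩⟩

@[simp] theorem mul_top (g h : Wr M) : (g * h).top = g.top + h.top := rfl

@[simp] theorem mul_fn (g h : Wr M) (p : ZMod 3) :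
    (g * h).fn p = g.fn (p + h.top) + h.fn p := rfl

@[simp] theorem one_top : (1 : Wr M).top = 0 := rfl

@[simp] theorem one_fn (p : ZMod 3) : (1 : Wr M).fn p = 0 := rfl

@[simp] theorem inv_top (g : Wr M) : g⁻¹.top = -g.top := rfl

@[simp] theorem inv_fn (g : Wr M) (p : ZMod 3) : g⁻¹.fn p = -g.fn (p - g.top) := rfl

instance : Group (Wr M) := Group.ofLeftAxioms
  (fun g h k => by ext <;> simp [add_assoc, add_comm, add_left_comm])
  (fun g => by ext <;> simp) (fun g => by ext <;> simp)

/-- The difference operator with step `a`. -/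
def diff (a : ZMod 3) (v : ZMod 3 → ZMod M) : ZMod 3 → ZMod M := fun p => v (p + a) - v p

/-- The sum of the coordinates of the base component. -/
def total (v : ZMod 3 → ZMod M) : ZMod M := v 0 + v 1 + v 2

/-- The embedding of the base group. -/
def base (v : ZMod 3 → ZMod M) : Wr M := ⟨0, v⟩

@[simp] theorem base_top (v : ZMod 3 → ZMod M) : (base v).top = 0 := rfl

@[simp] theorem base_fn (v : ZMod 3 → ZMod M) : (base v).fn = v := rfl

theorem fcomm_of_top_eq_zero {g : Wr M} (hg : g.top = 0) (x : Wr M) :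
    fcomm g x = base (diff x.top g.fn) := by
  ext <;> simp [fcomm, hg, diff, sub_eq_add_neg, add_comm, add_left_comm]

theorem fcomm_top (g x : Wr M) : (fcomm g x).top = 0 := by simp [fcomm]

theorem base_pow (v : ZMod 3 → ZMod M) (n : ℕ) : base v ^ n = base (n • v) := by
  induction n with
  | zero => ext <;> simp
  | succ n ih =>
    rw [pow_succ, ih]
    ext <;> simp [add_mul]

theorem add_eq_total {a : ZMod 3} (ha : a ≠ 0) (v : ZMod 3 → ZMod M) (p : ZMod 3) :
    v (p + a + a) + v (p + a) + v p = total v := by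
  have h : ∀ a p : ZMod 3, a ≠ 0 →
      (p + a + a = 0 ∧ p + a = 1 ∧ p = 2) ∨ (p + a + a = 0 ∧ p + a = 2 ∧ p = 1) ∨
      (p + a + a = 1 ∧ p + a = 0 ∧ p = 2) ∨ (p + a + a = 1 ∧ p + a = 2 ∧ p = 0) ∨
      (p + a + a = 2 ∧ p + a = 0 ∧ p = 1) ∨ (p + a + a = 2 ∧ p + a = 1 ∧ p = 0) := by decide
  unfold total
  rcases h a p ha with h | h | h | h | h | h <;> rw [h.1, h.2.1, h.2.2] <;> ring

theorem pow_three_of_top_ne_zero {g : Wr M} (hg : g.top ≠ 0) :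
    g ^ 3 = base fun _ => total g.fn := by
  ext p
  · have : ∀ a : ZMod 3, a + a + a = 0 := by decide
    simpa [pow_succ] using this g.top
  · simp only [pow_succ, pow_zero, one_mul, mul_fn, base_fn]
    exact add_eq_total hg g.fn p

theorem pow_three_of_top_eq_zero {g : Wr M} (hg : g.top = 0) : g ^ 3 = base (3 • g.fn) := by
  rw [← base_pow]
  congr 1
  ext <;> simp [hg]

theorem add_add_self (a p : ZMod 3) : p + a + a + a = p := by
  revert a p
  decide

theorem three_smul_eq {a : ZMod 3} (ha : a ≠ 0) (v : ZMod 3 → ZMod M) (p : ZMod 3) :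
    3 * v p = total v + diff a (diff a (diff a v)) p + 2 * diff a (diff a v) p := by
  rw [← add_eq_total ha v p]
  simp only [diff, add_add_self]
  ring

theorem total_diff (a : ZMod 3) (v : ZMod 3 → ZMod M) : total (diff a v) = 0 := by
  by_cases ha : a = 0
  · simp [ha, total, diff]
  · rw [← add_eq_total ha _ 0, diff, diff, diff, add_add_self]
    ring

theorem diff_diff_of_total_eq_zero {a : ZMod 3} (ha : a ≠ 0) {v : ZMod 3 → ZMod M}
    (hv : total v = 0) (p : ZMod 3) : diff a (diff a v) p = -3 * v (p + a) := by
  have := add_eq_total ha v p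
  simp only [diff]
  linear_combination this.trans hv

theorem iterate_diff_odd {a : ZMod 3} (ha : a ≠ 0) (v : ZMod 3 → ZMod M) (m : ℕ) (p : ZMod 3) :
    (diff a)^[2 * m + 1] v p = (-3) ^ m * diff a v (p + m * a) := by
  induction m generalizing p with
  | zero => simp
  | succ m ih =>
    rw [show 2 * (m + 1) + 1 = 2 * m + 1 + 1 + 1 by ring, Function.iterate_succ_apply',
      Function.iterate_succ_apply', diff_diff_of_total_eq_zero ha, ih, pow_succ']
    · push_cast
      rw [mul_assoc, show p + a + m * a = p + (m + 1) * a by ring]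
    · rw [Function.iterate_succ_apply']
      exact total_diff _ _

/-- In a wreath product the tail consists of iterated differences. -/
theorem tail_eq {c l k : ℕ} {x y t : Wr M} {s : ℕ → Wr M} (h : QRelations c l k x y t s)
    (j : ℕ) (hj : j + 2 ≤ c) : s (j + 2) = base ((diff x.top)^[j] (s 2).fn) := by
  induction j with
  | zero =>
    have : (s 2).top = 0 := by rw [h.two, fcomm_top]
    ext <;> simp [this]
  | succ j ih =>
    rw [show j + 1 + 2 = j + 2 + 1 by ring, h.succ (j + 2) (by omega) (by omega), ih (by omega),
      fcomm_of_top_eq_zero rfl, Function.iterate_succ_apply']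
    rfl

theorem tail_eq_one {c l k : ℕ} {x y t : Wr M} {s : ℕ → Wr M} (h : QRelations c l k x y t s)
    (hx : x.top = 0) (j : ℕ) (hj : 3 ≤ j) : s j = 1 := by
  rcases Nat.lt_or_ge c j with hc | hc
  · exact h.high j hc
  · obtain ⟨m, rfl⟩ : ∃ m, j = m + 1 + 2 := ⟨j - 3, by omega⟩
    rw [tail_eq h _ hc, Function.iterate_succ_apply']
    ext <;> simp [hx, diff]

end Wr

theorem QRelations.map {G H : Type*} [Group G] [Group H] {c l k : ℕ} {x y t : G} {s : ℕ → G}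
    (h : QRelations c l k x y t s) (f : G →* H) :
    QRelations c l k (f x) (f y) (f t) (fun j => f (s j)) where
  two := by rw [h.two]; simp [fcomm]
  three := by rw [h.three]; simp [fcomm]
  t_cube := by rw [← map_pow, h.t_cube, map_one]
  top := by rw [← map_pow, ← map_pow, h.top]
  x_cube := by rw [← map_pow, ← map_pow, h.x_cube]
  y_cube := by rw [← map_pow, h.y_cube]; simp
  succ j hj hjc := by rw [h.succ j hj hjc]; simp [fcomm]
  cube j hj hjc := by rw [← map_pow, h.cube j hj hjc]; simp
  high j hj := by rw [h.high j hj, map_one]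

section Residue

variable {m : ℕ}

theorem natCast_three_pow (m : ℕ) : (3 : ZMod (3 ^ (m + 1))) ^ (m + 1) = 0 := by
  have := ZMod.natCast_self (3 ^ (m + 1))
  exact_mod_cast this

theorem neg_three_pow_mul_three (m : ℕ) : (3 : ZMod (3 ^ (m + 1))) * (-3) ^ m = 0 := by
  rw [neg_pow]
  linear_combination (-1) ^ m * natCast_three_pow m

/-- The embedding of `ℤ/3` in `ℤ/3ᵐ⁺¹` with `1 ↦ (-3)ᵐ`. -/
def socle (m : ℕ) : ZMod 3 →+ ZMod (3 ^ (m + 1)) :=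
  ZMod.lift 3 ⟨zmultiplesHom _ ((-3) ^ m), by simp [neg_three_pow_mul_three]⟩

/-- Reduction modulo `3`. -/
def red (m : ℕ) : ZMod (3 ^ (m + 1)) →+* ZMod 3 :=
  ZMod.castHom (dvd_pow_self 3 (Nat.succ_ne_zero m)) _

theorem neg_three_pow_mul (w : ZMod (3 ^ (m + 1))) : (-3) ^ m * w = socle m (red m w) := by
  obtain ⟨i, rfl⟩ := ZMod.intCast_surjective w
  rw [map_intCast, socle, ZMod.lift_coe]
  simp [mul_comm]

theorem red_socle (hm : 1 ≤ m) (a : ZMod 3) : red m (socle m a) = 0 := by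
  obtain ⟨i, rfl⟩ := ZMod.intCast_surjective a
  rw [← map_intCast (red m), ← neg_three_pow_mul, map_mul, map_pow, map_neg]
  have : red m 3 = 0 := by
    have h := map_natCast (red m) 3
    exact_mod_cast h
  rw [this, neg_zero, zero_pow (by omega), zero_mul]

theorem socle_injective (m : ℕ) : Function.Injective (socle m) := by
  rw [injective_iff_map_eq_zero]
  intro a ha
  obtain ⟨i, rfl⟩ := ZMod.intCast_surjective a
  rw [← map_intCast (red m), ← neg_three_pow_mul] at ha
  have h : ((((-3) ^ m * i : ℤ)) : ZMod (3 ^ (m + 1))) = 0 := by exact_mod_cast ha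
  rw [ZMod.intCast_zmod_eq_zero_iff_dvd] at h
  rw [ZMod.intCast_zmod_eq_zero_iff_dvd]
  push_cast at h ⊢
  rw [neg_pow, mul_comm ((-1 : ℤ) ^ m), mul_assoc, pow_succ] at h
  have := Int.dvd_of_mul_dvd_mul_left (by positivity) h
  have h2 := this.mul_left ((-1) ^ m)
  rwa [← mul_assoc, ← mul_pow, neg_one_mul, neg_neg, one_pow, one_mul] at h2

theorem red_eq_zero_of_three_mul (hm : 1 ≤ m) {w : ZMod (3 ^ (m + 1))} (hw : 3 * w = 0) :
    red m w = 0 := by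
  apply socle_injective m
  obtain ⟨j, rfl⟩ : ∃ j, m = j + 1 := ⟨m - 1, by omega⟩
  rw [← neg_three_pow_mul, map_zero, pow_succ (-3 : ZMod _) j]
  linear_combination -(-3) ^ j * hw

end Residue

namespace Wr

variable {m : ℕ}

/-- Iterated differences of a function that is affine modulo `3` end in a constant. -/
theorem iterate_diff_eq_socle {a d : ZMod 3} (ha : a ≠ 0) {v : ZMod 3 → ZMod (3 ^ (m + 1))}
    (hv : ∀ p, red m (v (p + a)) - red m (v p) = d) :
    (diff a)^[2 * m + 1] v = fun _ => socle m d := by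
  ext p
  rw [iterate_diff_odd ha, neg_three_pow_mul, diff, map_sub, hv]

theorem base_mul (M : ℕ) (v w : ZMod 3 → ZMod M) : base v * base w = base (v + w) := by
  ext <;> simp

/-- The model on which the central element survives. -/
theorem qRelations_abelian (hm : 2 ≤ m) (l k : ℕ) :
    ∃ s, QRelations (2 * m + 2) l k
      (⟨1, fun p => if p = 0 then l * socle m 1 else 0⟩ : Wr (3 ^ (m + 1)))
      (base fun p => if p = 0 then k * socle m 1 - 1 else if p = 1 then 0 else 1) 1 s := by
  generalize hτ : (fun p : ZMod 3 => if p = 0 then l * socle m 1 else 0) = τ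
  generalize hr : (fun p : ZMod 3 => if p = 0 then k * socle m 1 - 1
    else if p = 1 then (0 : ZMod (3 ^ (m + 1))) else 1) = r
  have r0 : r 0 = k * socle m 1 - 1 := by simp [← hr]
  have r1 : r 1 = 0 := by simp [← hr]
  have r2 : r 2 = 1 := by
    simp [← hr, show (2 : ZMod 3) ≠ 0 by decide, show (2 : ZMod 3) ≠ 1 by decide]
  have htop : (diff 1)^[2 * m + 1] r = fun _ => socle m 1 := by
    refine iterate_diff_eq_socle one_ne_zero fun p => ?_
    have : p = 0 ∨ p = 1 ∨ p = 2 := by revert p; decide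
    rcases this with rfl | rfl | rfl
    · simp [r0, r1, red_socle (m := m) (by omega)]
    · rw [show (1 + 1 : ZMod 3) = 2 from rfl, r1, r2]
      simp
    · rw [show (2 + 1 : ZMod 3) = 0 from rfl, r0, r2]
      simp only [map_sub, map_mul, red_socle (m := m) (by omega : 1 ≤ m), map_one]
      rw [mul_zero]
      rfl
  have hhigh : ∀ j, (diff 1)^[2 * m + 1 + (j + 1)] r = 0 := fun j => by
    induction j with
    | zero =>
      rw [zero_add, Function.iterate_succ_apply', htop]
      ext
      simp [diff]
    | succ j ih =>
      rw [← add_assoc, Function.iterate_succ_apply', ih]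
      ext
      simp [diff]
  have hcube : ∀ j, 2 ≤ j → base ((diff 1)^[j - 1] r) ^ 3 =
      base ((diff 1)^[j + 2 - 1] r) ^ 2 * base ((diff 1)^[j + 3 - 1] r) := by
    intro j hj
    obtain ⟨i, rfl⟩ : ∃ i, j = i + 2 := ⟨j - 2, by omega⟩
    simp only [base_pow, base_mul, show i + 2 - 1 = i + 1 by omega,
      show i + 2 + 2 - 1 = i + 1 + 1 + 1 by omega, show i + 2 + 3 - 1 = i + 1 + 1 + 1 + 1 by omega,
      Function.iterate_succ_apply' (diff 1)]
    congr 1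
    ext p
    have := three_smul_eq one_ne_zero (diff 1 ((diff 1)^[i] r)) p
    rw [total_diff] at this
    simp only [Pi.smul_apply, Pi.add_apply]
    simp only [nsmul_eq_mul]
    push_cast
    linear_combination this
  refine ⟨fun j => base ((diff 1)^[j - 1] r), ?_, ?_, one_pow 3, ?_, ?_, ?_, ?_,
    fun j hj _ => hcube j hj, ?_⟩
  · rw [fcomm_of_top_eq_zero rfl]
    rfl
  · rw [fcomm_of_top_eq_zero rfl]
    ext <;> simp [diff]
  · have := hcube (2 * m) (by omega)
    rw [show 2 * m + 3 - 1 = 2 * m + 1 + (0 + 1) by omega, hhigh 0] at this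
    simp only [show 2 * m + 2 - 2 = 2 * m by omega]
    rw [this]
    ext <;> simp
  · rw [pow_three_of_top_ne_zero one_ne_zero, show 2 * m + 2 - 1 = 2 * m + 1 by omega, htop,
      base_pow]
    ext <;> simp [← hτ, total, show (2 : ZMod 3) ≠ 0 by decide]
  · rw [pow_three_of_top_eq_zero rfl, show 2 * m + 2 - 1 = 2 * m + 1 by omega, htop]
    simp only [base_pow, base_mul]
    congr 1
    ext p
    have := three_smul_eq one_ne_zero r p
    have ht : total r = k * socle m 1 := by
      rw [total, r0, r1, r2]
      ring
    rw [ht] at this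
    simp only [Pi.smul_apply, Pi.add_apply, nsmul_eq_mul, base_fn]
    push_cast
    exact this
  · intro j hj hjc
    rw [fcomm_of_top_eq_zero rfl, base_fn, ← Function.iterate_succ_apply' (diff 1)]
    congr 3
    omega
  · intro j hj
    rw [show j - 1 = 2 * m + 1 + (j - (2 * m + 3) + 1) by omega, hhigh]
    rfl

/-- The model of class three. -/
theorem qRelations_small {c : ℕ} (hc : 6 ≤ c) (l k : ℕ) :
    ∃ t s, QRelations c l k (base fun p => if p = 0 then 1 else 0 : Wr 3) (⟨1, 0⟩ : Wr 3) t s := by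
  generalize hx : (base fun p => if p = 0 then 1 else 0 : Wr 3) = x
  have hx0 : x.top = 0 := by rw [← hx]; rfl
  have cube0 : ∀ g : Wr 3, g.top = 0 → g ^ 3 = 1 := fun g hg => by
    rw [pow_three_of_top_eq_zero hg]
    ext p
    · rfl
    · simp [show (3 : ZMod 3) = 0 from rfl]
  have top2 := fcomm_top (⟨1, 0⟩ : Wr 3) x
  refine ⟨fcomm (fcomm ⟨1, 0⟩ x) ⟨1, 0⟩, fun j => if j = 2 then fcomm ⟨1, 0⟩ x else 1, ?_⟩
  refine ⟨by simp, by simp, cube0 _ (fcomm_top _ _), ?_, ?_, ?_, ?_, ?_, ?_⟩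
  · simp [show c - 2 ≠ 2 by omega, show c ≠ 2 by omega]
  · simp [show c ≠ 2 by omega, cube0 _ hx0]
  · rw [pow_three_of_top_ne_zero one_ne_zero]
    simp only [show c ≠ 2 by omega]
    ext <;> simp [total]
  · intro j hj hjc
    rcases eq_or_ne j 2 with rfl | hj2
    · change 1 = fcomm (fcomm ⟨1, 0⟩ x) x
      rw [fcomm_of_top_eq_zero top2, hx0]
      ext <;> simp [diff]
    · simp [hj2, show j ≠ 1 by omega, fcomm]
  · intro j hj hjc
    rcases eq_or_ne j 2 with rfl | hj2
    · simp [cube0 _ top2]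
    · simp [hj2, show j ≠ 0 by omega]
  · intro j hj
    simp [show j ≠ 2 by omega]

end Wr

namespace Wr

theorem total_mul {M : ℕ} (g h : Wr M) : total (g * h).fn = total g.fn + total h.fn := by
  have key : g.fn (0 + h.top) + g.fn (1 + h.top) + g.fn (2 + h.top) = total g.fn := by
    have : ∀ a : ZMod 3, (0 + a = 0 ∧ 1 + a = 1 ∧ 2 + a = 2) ∨
      (0 + a = 1 ∧ 1 + a = 2 ∧ 2 + a = 0) ∨ (0 + a = 2 ∧ 1 + a = 0 ∧ 2 + a = 1) := by decide
    unfold total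
    rcases this h.top with h | h | h <;> rw [h.1, h.2.1, h.2.2] <;> ring
  rw [← key]
  simp only [total, mul_fn]
  ring

theorem total_one {M : ℕ} : total (1 : Wr M).fn = 0 := by simp [total]

theorem total_inv {M : ℕ} (g : Wr M) : total g⁻¹.fn = -total g.fn := by
  rw [eq_neg_iff_add_eq_zero, ← total_mul, inv_mul_cancel, total_one]

theorem sub_eq_mul_of_total_eq_zero {f : ZMod 3 → ZMod 3} (hf : total f = 0) (p a : ZMod 3) :
    f (p + a) - f p = a * (f 2 - f 1) := by
  revert p a hf f
  unfold total
  decide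

variable {m : ℕ}

/-- The slope modulo `3` of the base component. -/
def slope (v : ZMod 3 → ZMod (3 ^ (m + 1))) : ZMod 3 := red m (v 2) - red m (v 1)

theorem red_sub_eq {v : ZMod 3 → ZMod (3 ^ (m + 1))} (hv : red m (total v) = 0) (p a : ZMod 3) :
    red m (v (p + a)) - red m (v p) = a * slope v := by
  refine sub_eq_mul_of_total_eq_zero (f := fun p => red m (v p)) ?_ p a
  simpa [total] using hv

theorem slope_mul (g : Wr (3 ^ (m + 1))) (hg : red m (total g.fn) = 0) (h : Wr (3 ^ (m + 1))) :
    slope (g * h).fn = slope g.fn + slope h.fn := by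
  have h1 := red_sub_eq hg 1 h.top
  have h2 := red_sub_eq hg 2 h.top
  simp only [slope, mul_fn, map_add] at h1 h2 ⊢
  linear_combination h2 - h1

theorem slope_one : slope (1 : Wr (3 ^ (m + 1))).fn = 0 := by simp [slope]

/-- Compatibility of the images of an element of `G_Q` in the two models. -/
structure Compatible (l k : ℕ) (g : Wr (3 ^ (m + 1))) (h : Wr 3) : Prop where
  total_small : total h.fn = g.top
  total_eq : total g.fn = l * socle m g.top + k * socle m h.top
  slope_eq : slope g.fn = h.top

theorem Compatible.red_total {l k : ℕ} {g : Wr (3 ^ (m + 1))} {h : Wr 3}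
    (H : Compatible l k g h) (hm : 1 ≤ m) : red m (total g.fn) = 0 := by
  rw [H.total_eq, map_add, map_mul, map_mul, red_socle hm, red_socle hm, mul_zero, mul_zero,
    add_zero]

theorem Compatible.mul {l k : ℕ} {g g' : Wr (3 ^ (m + 1))} {h h' : Wr 3}
    (H : Compatible l k g h) (H' : Compatible l k g' h') (hm : 1 ≤ m) :
    Compatible l k (g * g') (h * h') where
  total_small := by rw [total_mul, H.total_small, H'.total_small, mul_top]
  total_eq := by
    rw [total_mul, H.total_eq, H'.total_eq, mul_top, mul_top, map_add, map_add]
    ring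
  slope_eq := by rw [slope_mul _ (H.red_total hm), H.slope_eq, H'.slope_eq, mul_top]

theorem Compatible.inv {l k : ℕ} {g : Wr (3 ^ (m + 1))} {h : Wr 3}
    (H : Compatible l k g h) (hm : 1 ≤ m) : Compatible l k g⁻¹ h⁻¹ where
  total_small := by rw [total_inv, H.total_small, inv_top]
  total_eq := by
    rw [total_inv, H.total_eq, inv_top, inv_top, map_neg, map_neg]
    ring
  slope_eq := by
    have := slope_mul g (H.red_total hm) g⁻¹
    rw [mul_inv_cancel, slope_one, H.slope_eq] at this
    rw [inv_top]
    linear_combination -this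

theorem Compatible.one {l k : ℕ} : Compatible l k (1 : Wr (3 ^ (m + 1))) (1 : Wr 3) where
  total_small := by rw [total_one, one_top]
  total_eq := by simp [total_one]
  slope_eq := slope_one

theorem compatible_x (l k : ℕ) : Compatible l k
    (⟨1, fun p => if p = 0 then l * socle m 1 else 0⟩ : Wr (3 ^ (m + 1)))
    (base fun p => if p = 0 then 1 else 0) where
  total_small := by simp [total, show (2 : ZMod 3) ≠ 0 by decide]
  total_eq := by simp [total, show (2 : ZMod 3) ≠ 0 by decide]
  slope_eq := by simp [slope, show (2 : ZMod 3) ≠ 0 by decide]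

theorem compatible_y (l k : ℕ) : Compatible l k
    (base fun p => if p = 0 then k * socle m 1 - 1 else if p = 1 then 0 else 1 :
      Wr (3 ^ (m + 1))) ⟨1, 0⟩ where
  total_small := by simp [total]
  total_eq := by
    simp [total, show (2 : ZMod 3) ≠ 0 by decide, show (2 : ZMod 3) ≠ 1 by decide]
  slope_eq := by
    simp [slope, show (2 : ZMod 3) ≠ 0 by decide, show (2 : ZMod 3) ≠ 1 by decide]

/-- The projection to the cyclic group on top. -/
def topHom (M : ℕ) : Wr M →* Multiplicative (ZMod 3) where
  toFun g := Multiplicative.ofAdd g.top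
  map_one' := rfl
  map_mul' _ _ := rfl

/-- Two generating pairs in the two models can only differ by the evident rescaling. -/
theorem parameters_eq {l k l' k' : ℕ} (hm : 2 ≤ m) {x y t : Wr (3 ^ (m + 1))}
    {s : ℕ → Wr (3 ^ (m + 1))} {x' y' t' : Wr 3} {s' : ℕ → Wr 3}
    (h : QRelations (2 * m + 2) l' k' x y t s) (h' : QRelations (2 * m + 2) l' k' x' y' t' s')
    (hx : Compatible l k x x') (hy : Compatible l k y y')
    (hgen : ¬(x.top = 0 ∧ y.top = 0)) (hgen' : ¬(x'.top = 0 ∧ y'.top = 0)) :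
    x.top ≠ 0 ∧ y'.top ≠ 0 ∧ (l : ZMod 3) = l' * y'.top ∧ (k : ZMod 3) = k' * x.top := by
  have hx' : x'.top = 0 := by
    by_contra hβ
    have hs' : s' (2 * m + 2) = 1 := by
      rw [tail_eq h' (2 * m) le_rfl]
      obtain ⟨i, hi⟩ : ∃ i, 2 * m = i + 3 := ⟨2 * m - 3, by omega⟩
      have h0 : ∀ v : ZMod 3 → ZMod 3, (diff x'.top)^[3] v = 0 := fun v => by
        ext p
        change diff _ (diff _ (diff _ v)) p = 0
        simp only [diff, add_add_self]
        have h3 : (3 : ZMod 3) = 0 := rfl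
        linear_combination (v (p + x'.top) - v (p + x'.top + x'.top)) * h3
      rw [hi, add_comm, Function.iterate_add_apply, h0]
      rfl
    have e := h'.x_cube
    rw [hs', one_pow, pow_three_of_top_ne_zero hβ, hx.total_small] at e
    have hα : x.top = 0 := congrFun (congrArg Wr.fn e) 0
    have e := h.x_cube
    rw [tail_eq_one h hα _ (by omega), one_pow, pow_three_of_top_eq_zero hα] at e
    have hv : ∀ p, red m (x.fn p) = 0 := fun p => by
      have := congrFun (congrArg Wr.fn e) p
      refine red_eq_zero_of_three_mul (by omega) ?_
      simpa using this
    apply hβ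
    rw [← hx.slope_eq, slope, hv, hv, sub_zero]
  have hδ : y'.top ≠ 0 := fun hδ => hgen' ⟨hx', hδ⟩
  have hγ : y.top = 0 := by
    have e := h'.y_cube
    rw [tail_eq_one h' hx' _ (by omega), tail_eq_one h' hx' _ (by omega),
      tail_eq_one h' hx' _ (by omega), pow_three_of_top_ne_zero hδ, hy.total_small] at e
    simpa using congrFun (congrArg Wr.fn e) 0
  have hα : x.top ≠ 0 := fun hα => hgen ⟨hα, hγ⟩
  have hs2 : s 2 = base (diff x.top y.fn) := by rw [h.two, fcomm_of_top_eq_zero hγ]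
  have hs : ∀ j, j + 2 ≤ 2 * m + 2 → s (j + 2) = base ((diff x.top)^[j + 1] y.fn) := by
    intro j hj
    rw [tail_eq h j hj, hs2, Function.iterate_succ_apply]
    rfl
  have hz : s (2 * m + 2) = base fun _ => socle m (x.top * y'.top) := by
    rw [hs _ le_rfl, iterate_diff_eq_socle hα (red_sub_eq (hy.red_total (by omega)) · x.top),
      hy.slope_eq]
  refine ⟨hα, hδ, ?_, ?_⟩
  · have e := h.x_cube
    rw [hz, base_pow, pow_three_of_top_ne_zero hα, hx.total_eq, hx', map_zero, mul_zero,
      add_zero] at e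
    have e := congrFun (congrArg Wr.fn e) 0
    simp only [base_fn, Pi.smul_apply, ← nsmul_eq_mul, ← map_nsmul] at e
    have e := socle_injective m e
    simp only [nsmul_eq_mul] at e
    apply mul_right_cancel₀ hα
    linear_combination e
  · have e := h.y_cube
    rw [hz, hs 1 (by omega), hs 2 (by omega), pow_three_of_top_eq_zero hγ] at e
    simp only [base_pow, base_mul] at e
    have e := congrFun (congrArg Wr.fn e) 0
    have e3 := three_smul_eq hα y.fn 0
    rw [hy.total_eq, hγ, map_zero, mul_zero, zero_add] at e3
    simp only [base_fn, Pi.add_apply, Pi.smul_apply] at e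
    have e4 : k • socle m y'.top = k' • socle m (x.top * y'.top) := by
      change _ = _ + (diff x.top (diff x.top (diff x.top y.fn))) 0 +
        2 • diff x.top (diff x.top y.fn) 0 at e
      simp only [nsmul_eq_mul] at e ⊢
      push_cast at e
      linear_combination e - e3
    rw [← map_nsmul, ← map_nsmul] at e4
    have e := socle_injective m e4
    simp only [nsmul_eq_mul] at e
    apply mul_right_cancel₀ hδ
    linear_combination e

end Wr

theorem isEmpty_mulEquiv {c l k l' k' : ℕ} {Rx Ry Rx' Ry' : FreeGroup ℕ} (hc : 6 ≤ c)
    (heven : Even c) (hx : IsXRelator c l Rx) (hy : IsYRelator c k Ry)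
    (hx' : IsXRelator c l' Rx') (hy' : IsYRelator c k' Ry')
    (hne : ((l : ZMod 3) = 0 ↔ (l' : ZMod 3) ≠ 0) ∨ ((k : ZMod 3) = 0 ↔ (k' : ZMod 3) ≠ 0)) :
    IsEmpty (GQ c Rx Ry ≃* GQ c Rx' Ry') := by
  refine ⟨fun e => ?_⟩
  obtain ⟨m, rfl⟩ : ∃ m, c = 2 * m + 2 := by
    obtain ⟨n, rfl⟩ := heven
    exact ⟨n - 1, by omega⟩
  obtain ⟨s, hs⟩ := Wr.qRelations_abelian (m := m) (by omega) l' k'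
  obtain ⟨t', s', hs'⟩ := Wr.qRelations_small hc l' k'
  obtain ⟨W, Wx, Wy⟩ := hs.exists_hom hc hx' hy'
  obtain ⟨Q, Qx, Qy⟩ := hs'.exists_hom hc hx' hy'
  have compat : ∀ g, Wr.Compatible l' k' (W g) (Q g) := by
    intro g
    have hg : g ∈ Subgroup.closure _ := closure_eq_top hx' hy' ▸ Subgroup.mem_top g
    induction hg using Subgroup.closure_induction with
    | mem g hg =>
      rcases hg with rfl | rfl
      · rw [Wx, Qx]
        exact Wr.compatible_x l' k'
      · rw [Wy, Qy]
        exact Wr.compatible_y l' k'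
    | one =>
      rw [map_one, map_one]
      exact Wr.Compatible.one
    | mul g h _ _ hg hh =>
      rw [map_mul, map_mul]
      exact hg.mul hh (by omega)
    | inv g _ hg =>
      rw [map_inv, map_inv]
      exact hg.inv (by omega)
  have trivial_of : ∀ f : GQ (2 * m + 2) Rx' Ry' →* Multiplicative (ZMod 3),
      f (e (PresentedGroup.mk _ xw)) = 1 → f (e (PresentedGroup.mk _ yw)) = 1 → ∀ g, f g = 1 := by
    intro f fx fy g
    have : f.comp e.toMonoidHom = 1 := by
      refine MonoidHom.eq_of_eqOn_dense (closure_eq_top hx hy) ?_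
      rintro _ (rfl | rfl)
      · exact fx
      · exact fy
    have := DFunLike.congr_fun this (e.symm g)
    simpa using this
  have rel := (qRelations_mk hx hy).map e.toMonoidHom
  obtain ⟨hα, hδ, hl, hk⟩ := Wr.parameters_eq (by omega) (rel.map W) (rel.map Q)
    (compat _) (compat _) (fun h => by
      have := trivial_of ((Wr.topHom _).comp W) h.1 h.2 (PresentedGroup.mk _ xw)
      rw [MonoidHom.comp_apply, Wx] at this
      exact one_ne_zero (α := ZMod 3) this)
    (fun h => by
      have := trivial_of ((Wr.topHom _).comp Q) h.1 h.2 (PresentedGroup.mk _ yw)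
      rw [MonoidHom.comp_apply, Qy] at this
      exact one_ne_zero (α := ZMod 3) this)
  rcases hne with hne | hne
  · rw [hl, mul_ne_zero_iff_right hδ] at hne
    tauto
  · rw [hk, mul_ne_zero_iff_right hα] at hne
    tauto

theorem GQ_iso_and_four_nonisomorphic_of_even (c : ℕ) (hc : 6 ≤ c) (heven : Even c) :
    (∀ Rx ∈ RxSet c, Nonempty (GQ c Rx (Ry1 c) ≃* GQ c Rx (Ry2 c))) ∧
    List.Pairwise (fun p q => IsEmpty (GQ c p.1 p.2 ≃* GQ c q.1 q.2))
      [(xw ^ 3, Ry0), (xw ^ 3 * (sw c)⁻¹, Ry0),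
       (xw ^ 3, Ry1 c), (xw ^ 3 * (sw c)⁻¹, Ry1 c)] := by
  constructor
  · rintro _ (rfl | rfl)
    · exact nonempty_mulEquiv hc heven (Or.inl rfl) (by norm_num) (isXRelator_zero c)
        (isYRelator_one c) (isYRelator_two c)
    · exact nonempty_mulEquiv hc heven (Or.inr rfl) (by norm_num) (isXRelator_one c)
        (isYRelator_one c) (isYRelator_two c)
  · have x0 := isXRelator_zero c
    have x1 := isXRelator_one c
    have y0 := isYRelator_zero c
    have y1 := isYRelator_one c
    simp only [List.pairwise_cons, List.mem_cons, List.not_mem_nil, or_false, forall_eq_or_imp,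
      forall_eq, IsEmpty.forall_iff, implies_true, List.Pairwise.nil, and_true]
    exact ⟨⟨isEmpty_mulEquiv hc heven x0 y0 x1 y0 (by simp),
      isEmpty_mulEquiv hc heven x0 y0 x0 y1 (by simp),
      isEmpty_mulEquiv hc heven x0 y0 x1 y1 (by simp)⟩,
      ⟨isEmpty_mulEquiv hc heven x1 y0 x0 y1 (by simp),
      isEmpty_mulEquiv hc heven x1 y0 x1 y1 (by simp)⟩,
      isEmpty_mulEquiv hc heven x0 y1 x1 y1 (by simp)⟩
end
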